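/- arXiv:2409.06849 — 3 statements merged into one kernel-verified Lean document; each statement's English description precedes it below -/
import Mathlib

section
/- For every integer d ≥ 3, the asymptotic critical exponent is preserved by the projection π : i ↦ a b^i, i.e., E*(π(u_d)) = E*(u_d), where u_d is the fixed point of φ_d. -/
namespace RichRT

variable {A : Type*}

/-- The word `w` occurs in the sequence `u` at position `j`. -/
def OccursAt (w : List A) (u : ℕ → A) (j : ℕ) : Prop :=
  w = (List.range w.length).map fun t => u (j + t)

/-- `w` is a factor of the infinite sequence `u`. -/
def IsFactorS (w : List A) (u : ℕ → A) : Prop :=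
  ∃ j : ℕ, OccursAt w u j

/-- `u` is recurrent: every factor occurs infinitely often. -/
def Recurrent (u : ℕ → A) : Prop :=
  ∀ w : List A, IsFactorS w u → ∀ N : ℕ, ∃ j, N ≤ j ∧ OccursAt w u j

/-- The number of distinct palindromic factors of a finite word. -/
noncomputable def palCount (w : List A) : ℕ :=
  Set.ncard {p : List A | p <:+: w ∧ p.reverse = p}

/-- A finite word of length `n` is rich if it has exactly `n+1` palindromic factors. -/
def RichWord (w : List A) : Prop := palCount w = w.length + 1

/-- A sequence is rich if all its factors are rich. -/
def RichSeq (u : ℕ → A) : Prop := ∀ w : List A, IsFactorS w u → RichWord w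

/-- The prefix of length `k` of the periodic sequence `vvv⋯`. -/
def powPref (v : List A) (k : ℕ) : List A := ((List.replicate k v).flatten).take k

/-- The set of exponents `k/|v|` of fractional powers `v^(k/|v|)` occurring in `u`,
with `|v| ≥ n`. -/
def expSet (u : ℕ → A) (n : ℕ) : Set ℝ :=
  {x | ∃ (v : List A) (k : ℕ), v ≠ [] ∧ n ≤ v.length ∧
    IsFactorS (powPref v k) u ∧ x = (k : ℝ) / (v.length : ℝ)}

/-- The critical exponent of a sequence, with values in `EReal`. -/
noncomputable def critExp (u : ℕ → A) : EReal :=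
  sSup ((fun x : ℝ => (x : EReal)) '' expSet u 0)

/-- The asymptotic critical exponent of a sequence: `⊤` if the critical exponent is `⊤`,
otherwise the limit (= infimum, by monotonicity) over `n` of the suprema of exponents of
powers `v^e` with `|v| ≥ n`. -/
noncomputable def acritExp (u : ℕ → A) : EReal :=
  if critExp u = ⊤ then ⊤
  else ⨅ n : ℕ, sSup ((fun x : ℝ => (x : EReal)) '' expSet u n)

/-- The morphism `φ_d` on letters: `i ↦ 0(i+1)` for `i < d-1`, `d-1 ↦ 0(d-1)(d-1)`. -/
def phiL (d : ℕ) (i : ℕ) : List ℕ :=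
  if i < d - 1 then [0, i + 1] else [0, d - 1, d - 1]

/-- The morphism `φ_d` on words. -/
def phiW (d : ℕ) (w : List ℕ) : List ℕ := w.flatMap (phiL d)

/-- `u` is the fixed point of `φ_d`: it begins with `0` and `φ_d(u) = u`, i.e. the image
of every prefix of `u` is again a prefix of `u`. -/
def IsPhiFixed (d : ℕ) (u : ℕ → ℕ) : Prop :=
  u 0 = 0 ∧ ∀ m : ℕ, OccursAt (phiW d ((List.range m).map u)) u 0

/-- Left extensions of `w` in `u`. -/
def Lext (u : ℕ → ℕ) (w : List ℕ) : Set (List ℕ) :=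
  {x | ∃ i : ℕ, x = i :: w ∧ IsFactorS x u}

/-- Right extensions of `w` in `u`. -/
def Rext (u : ℕ → ℕ) (w : List ℕ) : Set (List ℕ) :=
  {x | ∃ i : ℕ, x = w ++ [i] ∧ IsFactorS x u}

/-- Both-sided extensions of `w` in `u`. -/
def Bext (u : ℕ → ℕ) (w : List ℕ) : Set (List ℕ) :=
  {x | ∃ i j : ℕ, x = i :: (w ++ [j]) ∧ IsFactorS x u}

/-- `w` is a bispecial factor of `u`. -/
def Bispecial (u : ℕ → ℕ) (w : List ℕ) : Prop :=
  IsFactorS w u ∧ 2 ≤ (Lext u w).ncard ∧ 2 ≤ (Rext u w).ncard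

/-- The bilateral order `b(w) = #Bext(w) − #Lext(w) − #Rext(w) + 1`. -/
noncomputable def bord (u : ℕ → ℕ) (w : List ℕ) : ℤ :=
  ((Bext u w).ncard : ℤ) - ((Lext u w).ncard : ℤ) - ((Rext u w).ncard : ℤ) + 1

/-- The palindromes `F_0 = ε`, `F_i = φ(F_{i-1})0`. -/
def Fword (d : ℕ) : ℕ → List ℕ
  | 0 => []
  | i + 1 => phiW d (Fword d i) ++ [0]

/-- Membership in the set `𝒯` of bispecial triplets. -/
def TripleMem (d : ℕ) (u : ℕ → ℕ) (t : ℕ × List ℕ × ℕ) : Prop :=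
  Bispecial u t.2.1 ∧ t.1 < d - 1 ∧ t.2.2 < d - 1 ∧
    IsFactorS (t.1 :: t.2.1) u ∧ IsFactorS (t.2.1 ++ [t.2.2]) u

/-- The map `f` on triplets. -/
def fmap (d : ℕ) (t : ℕ × List ℕ × ℕ) : ℕ × List ℕ × ℕ :=
  ((t.1 + 1) % (d - 1),
   (if t.1 = d - 2 then [d - 1] else []) ++ phiW d t.2.1 ++ [0] ++
     (if t.2.2 = d - 2 then [d - 1] else []),
   (t.2.2 + 1) % (d - 1))

/-- The initial triplets `T_k = (0, ε, k)` for `k ≤ d-2` and `T_{d-1} = (0, d-1, 0)`. -/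
def Tinit (d k : ℕ) : ℕ × List ℕ × ℕ :=
  if k = d - 1 then (0, [d - 1], 0) else (0, ([] : List ℕ), k)

/-- The Parikh vector of a word. -/
def parikh (d : ℕ) (w : List ℕ) : Fin d → ℕ := fun i => w.count (i : ℕ)

/-- The incidence matrix of `φ_d`. -/
def Mmat (d : ℕ) : Matrix (Fin d) (Fin d) ℕ := fun i j => (phiL d (j : ℕ)).count (i : ℕ)

/-- `r` is a return word to `w` in `u`. -/
def ReturnWord (u : ℕ → ℕ) (w r : List ℕ) : Prop :=
  ∃ j ℓ : ℕ, j < ℓ ∧ OccursAt w u j ∧ OccursAt w u ℓ ∧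
    (∀ m, j < m → m < ℓ → ¬ OccursAt w u m) ∧
    r = (List.range (ℓ - j)).map fun t => u (j + t)

/-- `R` is a complete return word to `w` in `u`. -/
def CompleteReturn (u : ℕ → ℕ) (w R : List ℕ) : Prop :=
  ∃ r : List ℕ, ReturnWord u w r ∧ R = r ++ w

/-- The projection `π : i ↦ a bⁱ` to the binary alphabet (here `a = false`, `b = true`). -/
def piL (i : ℕ) : List Bool := false :: List.replicate i true

/-- `u` has period `p` on the window of length `k` starting at `j`. -/
def Per (u : ℕ → A) (j p k : ℕ) : Prop := ∀ t, t + p < k → u (j + t + p) = u (j + t)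

lemma occursAt_iff (w : List A) (u : ℕ → A) (j : ℕ) :
    OccursAt w u j ↔ ∀ t, t < w.length → w[t]? = some (u (j + t)) := by
  unfold OccursAt
  constructor
  · intro h t ht
    rw [h]
    simp [ht]
  · intro h
    apply List.ext_getElem?
    intro t
    by_cases ht : t < w.length
    · rw [h t ht]; simp [ht]
    · rw [List.getElem?_eq_none (by omega), List.getElem?_eq_none (by simp; omega)]

lemma flatten_getElem? (w : List A) (hw : w ≠ []) (k : ℕ) :
    ∀ t, t < k * w.length → ((List.replicate k w).flatten)[t]? = w[t % w.length]? := by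
  have hp : 0 < w.length := List.length_pos_iff.2 hw
  induction k with
  | zero => intro t ht; simp at ht
  | succ k ih =>
    intro t ht
    rw [List.replicate_succ, List.flatten_cons]
    by_cases h : t < w.length
    · rw [List.getElem?_append_left h, Nat.mod_eq_of_lt h]
    · push Not at h
      rw [List.getElem?_append_right h, ih (t - w.length) (by
        rw [Nat.succ_mul] at ht; omega), Nat.mod_eq_sub_mod h]

lemma powPref_length (w : List A) (hw : w ≠ []) (k : ℕ) : (powPref w k).length = k := by
  have hp : 0 < w.length := List.length_pos_iff.2 hw
  simp only [powPref, List.length_take, List.length_flatten, List.map_replicate,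
    List.sum_replicate, smul_eq_mul]
  exact min_eq_left (Nat.le_mul_of_pos_right k hp)

lemma powPref_getElem? (w : List A) (hw : w ≠ []) (k t : ℕ) (ht : t < k) :
    (powPref w k)[t]? = w[t % w.length]? := by
  have hp : 0 < w.length := List.length_pos_iff.2 hw
  have := Nat.le_mul_of_pos_right k hp
  rw [powPref, List.getElem?_take_of_lt ht, flatten_getElem? w hw k t (by omega)]

lemma mem_expSet (u : ℕ → A) (n : ℕ) (x : ℝ) :
    x ∈ expSet u n ↔ ∃ j p k : ℕ, 0 < p ∧ n ≤ p ∧ Per u j p k ∧ x = (k : ℝ) / (p : ℝ) := by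
  constructor
  · rintro ⟨w, k, hw, hn, ⟨j, hj⟩, rfl⟩
    have hp : 0 < w.length := List.length_pos_iff.2 hw
    refine ⟨j, w.length, k, hp, hn, ?_, rfl⟩
    rw [occursAt_iff, powPref_length w hw] at hj
    intro t ht
    have h1 := hj t (by omega)
    have h2 := hj (t + w.length) ht
    rw [powPref_getElem? w hw k _ (by omega)] at h1 h2
    rw [Nat.add_mod_right, h1] at h2
    rw [add_assoc]
    exact (Option.some.inj h2).symm
  · rintro ⟨j, p, k, hp, hn, hper, rfl⟩
    have hlen : ((List.range p).map fun t => u (j + t)).length = p := by simp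
    have hw : ((List.range p).map fun t => u (j + t)) ≠ [] := by
      intro h; rw [h] at hlen; simp at hlen; omega
    refine ⟨(List.range p).map fun t => u (j + t), k, hw, by simpa using hn, ⟨j, ?_⟩, by simp⟩
    rw [occursAt_iff, powPref_length _ hw]
    intro t ht
    rw [powPref_getElem? _ hw k t ht, hlen]
    have hm : t % p < p := Nat.mod_lt _ hp
    rw [List.getElem?_map, List.getElem?_range hm]
    simp only [Option.map_some, Option.some.injEq]
    induction t using Nat.strong_induction_on with
    | _ t ih =>
      by_cases h : t < p
      · rw [Nat.mod_eq_of_lt h]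
      · push Not at h
        rw [Nat.mod_eq_sub_mod h]
        rw [ih (t - p) (by omega) (by omega) (Nat.mod_lt _ hp)]
        have := hper (t - p) (by omega)
        rw [← this]; congr 1; omega

lemma one_mem_expSet (u : ℕ → A) (n : ℕ) : (1 : ℝ) ∈ expSet u n := by
  rw [mem_expSet]
  refine ⟨0, n + 1, n + 1, by omega, by omega, ?_, ?_⟩
  · intro t ht; omega
  · rw [div_self]; positivity

lemma exists_block (B : ℕ → ℕ) (hB : StrictMono B) (h0 : B 0 = 0) (j : ℕ) :
    ∃ m, B m ≤ j ∧ j < B (m + 1) := by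
  induction j with
  | zero => exact ⟨0, by omega, by have := hB (show 0 < 0 + 1 by omega); omega⟩
  | succ j ih =>
    obtain ⟨m, h1, h2⟩ := ih
    by_cases h : j + 1 < B (m + 1)
    · exact ⟨m, by omega, h⟩
    · exact ⟨m + 1, by omega, by have := hB (show m + 1 < m + 1 + 1 by omega); omega⟩

/-! ### Uniform frequencies -/

/-- The action of `φ` on letter weights. -/
def Tw (d : ℕ) (f : ℕ → ℝ) : ℕ → ℝ := fun i => ((phiL d i).map f).sum

lemma Tw_lt (d : ℕ) (f : ℕ → ℝ) (i : ℕ) (h : i < d - 1) : Tw d f i = f 0 + f (i + 1) := by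
  simp [Tw, phiL, h]

lemma Tw_last (d : ℕ) (f : ℕ → ℝ) : Tw d f (d - 1) = f 0 + 2 * f (d - 1) := by
  simp [Tw, phiL]; ring

/-- Prefix sums of weights along `u`. -/
def Sw (u : ℕ → ℕ) (f : ℕ → ℝ) (m : ℕ) : ℝ := ∑ t ∈ Finset.range m, f (u t)

lemma Sw_succ (u : ℕ → ℕ) (f : ℕ → ℝ) (m : ℕ) : Sw u f (m + 1) = Sw u f m + f (u m) :=
  Finset.sum_range_succ _ _

lemma sum_map_range (u : ℕ → ℕ) (f : ℕ → ℝ) (m : ℕ) :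
    (((List.range m).map u).map f).sum = Sw u f m := by
  induction m with
  | zero => simp [Sw]
  | succ m ih => rw [Sw_succ, ← ih, List.range_succ]; simp

/-- Length of the image of a prefix. -/
def Qlen (d : ℕ) (u : ℕ → ℕ) (m : ℕ) : ℕ := (phiW d ((List.range m).map u)).length

lemma Qlen_succ (d : ℕ) (u : ℕ → ℕ) (m : ℕ) :
    Qlen d u (m + 1) = Qlen d u m + (phiL d (u m)).length := by
  simp [Qlen, phiW, List.range_succ]

lemma phiL_length (d i : ℕ) : 2 ≤ (phiL d i).length ∧ (phiL d i).length ≤ 3 := by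
  unfold phiL; split_ifs <;> simp

lemma Qlen_zero (d : ℕ) (u : ℕ → ℕ) : Qlen d u 0 = 0 := by simp [Qlen, phiW]

lemma Qlen_strictMono (d : ℕ) (u : ℕ → ℕ) : StrictMono (Qlen d u) :=
  strictMono_nat_of_lt_succ fun m => by
    have := phiL_length d (u m)
    rw [Qlen_succ]; omega

lemma sum_phiW (d : ℕ) (f : ℕ → ℝ) (w : List ℕ) :
    ((phiW d w).map f).sum = (w.map (Tw d f)).sum := by
  induction w with
  | nil => simp [phiW]
  | cons a w ih =>
    have : phiW d (a :: w) = phiL d a ++ phiW d w := by simp [phiW]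
    rw [this, List.map_append, List.sum_append, ih]; simp [Tw]

lemma Sw_Qlen (d : ℕ) (u : ℕ → ℕ) (hu : IsPhiFixed d u) (f : ℕ → ℝ) (m : ℕ) :
    Sw u f (Qlen d u m) = Sw u (Tw d f) m := by
  have h := hu.2 m
  unfold OccursAt at h
  rw [← sum_map_range, ← sum_map_range, ← sum_phiW]
  conv_rhs => rw [h]
  simp [Qlen]

lemma u_lt (d : ℕ) (hd : 3 ≤ d) (u : ℕ → ℕ) (hu : IsPhiFixed d u) (t : ℕ) : u t < d := by
  have h := hu.2 (t + 1)
  rw [occursAt_iff] at h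
  have hl : t + 1 ≤ Qlen d u (t + 1) := (Qlen_strictMono d u).id_le (t + 1)
  have h2 := h t (by unfold Qlen at hl; omega)
  have hm := List.mem_of_getElem? h2
  simp only [phiW, List.mem_flatMap, zero_add] at hm
  obtain ⟨i, -, hi⟩ := hm
  unfold phiL at hi
  split_ifs at hi <;> simp at hi <;> omega

lemma Sw_lift (d : ℕ) (hd : 3 ≤ d) (u : ℕ → ℕ) (hu : IsPhiFixed d u) (f : ℕ → ℝ)
    (h : ∃ C : ℝ, ∀ i j, i ≤ j → -C ≤ Sw u (Tw d f) j - Sw u (Tw d f) i) :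
    ∃ C : ℝ, ∀ i j, i ≤ j → -C ≤ Sw u f j - Sw u f i := by
  obtain ⟨C, hC⟩ := h
  set K : ℝ := ∑ i ∈ Finset.range d, |f i| with hK
  have hfK : ∀ t, |f (u t)| ≤ K := fun t =>
    Finset.single_le_sum (f := fun i => |f i|) (fun i _ => abs_nonneg _)
      (Finset.mem_range.2 (u_lt d hd u hu t))
  have hK0 : 0 ≤ K := (abs_nonneg _).trans (hfK 0)
  have step : ∀ s m, |Sw u f (m + s) - Sw u f m| ≤ s * K := by
    intro s m
    induction s with
    | zero => simp
    | succ s ih =>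
      rw [← add_assoc, Sw_succ]
      have := hfK (m + s)
      rw [abs_le] at *
      push_cast
      constructor <;> linarith [ih.1, ih.2, this.1, this.2]
  have near : ∀ j, ∃ m, Qlen d u m ≤ j ∧ j < Qlen d u (m + 1) ∧
      |Sw u f j - Sw u (Tw d f) m| ≤ 3 * K := by
    intro j
    obtain ⟨m, h1, h2⟩ := exists_block _ (Qlen_strictMono d u) (Qlen_zero d u) j
    refine ⟨m, h1, h2, ?_⟩
    have h3 := step (j - Qlen d u m) (Qlen d u m)
    rw [Nat.add_sub_cancel' h1, Sw_Qlen d u hu] at h3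
    refine h3.trans (mul_le_mul_of_nonneg_right ?_ hK0)
    rw [Qlen_succ] at h2
    have := phiL_length d (u m)
    have h4 : j - Qlen d u m ≤ 3 := by omega
    exact_mod_cast h4
  refine ⟨C + 6 * K, fun i j hij => ?_⟩
  obtain ⟨m, a1, a2, a3⟩ := near i
  obtain ⟨m', b1, b2, b3⟩ := near j
  have hmm : m ≤ m' := by
    have : m < m' + 1 := (Qlen_strictMono d u).lt_iff_lt.1 (by omega)
    omega
  have := hC m m' hmm
  rw [abs_le] at a3 b3
  linarith [a3.1, a3.2, b3.1, b3.2]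

lemma Sw_iter (d : ℕ) (hd : 3 ≤ d) (u : ℕ → ℕ) (hu : IsPhiFixed d u) (n : ℕ) :
    ∀ f : ℕ → ℝ, (∀ i, i < d → 0 ≤ ((Tw d)^[n] f) i) →
    ∃ C : ℝ, ∀ i j, i ≤ j → -C ≤ Sw u f j - Sw u f i := by
  induction n with
  | zero =>
    intro f hf
    refine ⟨0, fun i j hij => ?_⟩
    have : Sw u f i ≤ Sw u f j := by
      apply monotone_nat_of_le_succ _ hij
      intro m
      rw [Sw_succ]
      have := hf (u m) (u_lt d hd u hu m)
      simp at this
      linarith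
    linarith
  | succ n ih =>
    intro f hf
    apply Sw_lift d hd u hu
    apply ih
    intro i hi
    have := hf i hi
    rwa [Function.iterate_succ_apply] at this

lemma Tw_lin (d : ℕ) (f g : ℕ → ℝ) (a b : ℝ) :
    Tw d (fun i => a * f i + b * g i) = fun i => a * Tw d f i + b * Tw d g i := by
  funext i
  unfold Tw phiL
  split_ifs <;> simp <;> ring

lemma Tw_iter_lin (d n : ℕ) : ∀ (f g : ℕ → ℝ) (a b : ℝ),
    (Tw d)^[n] (fun i => a * f i + b * g i) =
      fun i => a * (Tw d)^[n] f i + b * (Tw d)^[n] g i := by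
  induction n with
  | zero => intro f g a b; rfl
  | succ n ih =>
    intro f g a b
    simp only [Function.iterate_succ_apply]
    rw [Tw_lin, ih]

/-- lengths of the iterated images -/
def Ln (d n : ℕ) : ℕ → ℝ := (Tw d)^[n] (fun _ => 1)

/-- projected lengths of the iterated images -/
def Nn (d n : ℕ) : ℕ → ℝ := (Tw d)^[n] (fun i => (i : ℝ) + 1)

lemma Ln_succ (d n : ℕ) : Ln d (n + 1) = Tw d (Ln d n) := Function.iterate_succ_apply' _ _ _

lemma Nn_succ (d n : ℕ) : Nn d (n + 1) = Tw d (Nn d n) := Function.iterate_succ_apply' _ _ _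

lemma Ln_pos (d : ℕ) (hd : 3 ≤ d) (n : ℕ) : ∀ i, i < d → 0 < Ln d n i := by
  induction n with
  | zero => intro i _; simp [Ln]
  | succ n ih =>
    intro i hi
    rw [Ln_succ]
    have h0 := ih 0 (by omega)
    by_cases h : i < d - 1
    · rw [Tw_lt _ _ _ h]; linarith [ih (i + 1) (by omega)]
    · obtain rfl : i = d - 1 := by omega
      rw [Tw_last]; linarith [ih (d - 1) hi]

lemma Ln_double (d : ℕ) (hd : 3 ≤ d) (n : ℕ) :
    ∀ i, i + 1 < d → Ln d n (i + 1) ≤ 2 * Ln d n i := by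
  induction n with
  | zero => intro i _; simp [Ln]
  | succ n ih =>
    intro i hi
    rw [Ln_succ, Tw_lt _ _ i (by omega)]
    have h0 := Ln_pos d hd n 0 (by omega)
    by_cases h : i + 1 < d - 1
    · rw [Tw_lt _ _ _ h]; linarith [ih (i + 1) (by omega)]
    · obtain h : i + 1 = d - 1 := by omega
      rw [h, Tw_last]; linarith

lemma Ln_le_zero (d : ℕ) (hd : 3 ≤ d) (n : ℕ) :
    ∀ i, i < d → Ln d n i ≤ 2 ^ i * Ln d n 0 := by
  intro i
  induction i with
  | zero => intro _; simp
  | succ i ih =>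
    intro hi
    have h1 := ih (by omega)
    have h2 := Ln_double d hd n i hi
    rw [pow_succ]; linarith

lemma Ln_ratio (d : ℕ) (hd : 3 ≤ d) (n i : ℕ) (hi : i < d) :
    (1 / (3 * 2 ^ d)) * Ln d (n + 1) i ≤ Ln d n 0 := by
  have hp := Ln_pos d hd n 0 (by omega)
  have h2 : ∀ i, i < d → Ln d n i ≤ 2 ^ d * Ln d n 0 := fun i hi =>
    (Ln_le_zero d hd n i hi).trans (mul_le_mul_of_nonneg_right
      (pow_le_pow_right₀ (by norm_num) hi.le) hp.le)
  have h0 := h2 0 (by omega)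
  have : Ln d (n + 1) i ≤ 3 * 2 ^ d * Ln d n 0 := by
    rw [Ln_succ]
    by_cases h : i < d - 1
    · rw [Tw_lt _ _ _ h]
      have := h2 (i + 1) (by omega)
      linarith
    · obtain rfl : i = d - 1 := by omega
      rw [Tw_last]
      have := h2 (d - 1) (by omega)
      linarith
  rw [one_div, inv_mul_le_iff₀ (by positivity)]
  exact this

lemma ratio_bounds (d : ℕ) (hd : 3 ≤ d) (n : ℕ) : ∃ a b : ℝ, 1 ≤ a ∧ a ≤ b ∧ b ≤ d ∧
    b - a ≤ (1 - 1 / (3 * 2 ^ d)) ^ n * d ∧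
    ∀ i, i < d → a * Ln d n i ≤ Nn d n i ∧ Nn d n i ≤ b * Ln d n i := by
  have hd' : (3 : ℝ) ≤ d := by exact_mod_cast hd
  set c : ℝ := 1 / (3 * 2 ^ d) with hc
  have hc0 : 0 < c := by positivity
  have hc1 : c ≤ 1 := by
    rw [hc, div_le_one (by positivity)]
    have : (1 : ℝ) ≤ 2 ^ d := one_le_pow₀ (by norm_num)
    linarith
  induction n with
  | zero =>
    refine ⟨1, d, le_refl _, by linarith, le_refl _, by simp, ?_⟩
    intro i hi
    have : (i : ℝ) + 1 ≤ d := by exact_mod_cast hi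
    simp [Ln, Nn, this]
  | succ n ih =>
    obtain ⟨a, b, ha, hab, hb, hdiff, h⟩ := ih
    have hp := Ln_pos d hd n 0 (by omega)
    obtain ⟨r, hr⟩ : ∃ r, Nn d n 0 = r * Ln d n 0 := ⟨Nn d n 0 / Ln d n 0, by field_simp⟩
    have h0 := h 0 (by omega)
    rw [hr] at h0
    have har : a ≤ r := le_of_mul_le_mul_right h0.1 hp
    have hrb : r ≤ b := le_of_mul_le_mul_right h0.2 hp
    refine ⟨a + c * (r - a), b - c * (b - r), ?_, ?_, ?_, ?_, ?_⟩
    · nlinarith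
    · nlinarith
    · nlinarith
    · rw [pow_succ]; nlinarith
    · intro i hi
      have hL := Ln_ratio d hd n i hi
      rw [← hc] at hL
      have e1 : (r - a) * (c * Ln d (n + 1) i) ≤ (r - a) * Ln d n 0 :=
        mul_le_mul_of_nonneg_left hL (by linarith)
      have e2 : (b - r) * (c * Ln d (n + 1) i) ≤ (b - r) * Ln d n 0 :=
        mul_le_mul_of_nonneg_left hL (by linarith)
      by_cases h' : i < d - 1
      · have h1 := h (i + 1) (by omega)
        have eL : Ln d (n + 1) i = Ln d n 0 + Ln d n (i + 1) := by rw [Ln_succ, Tw_lt _ _ _ h']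
        have eN : Nn d (n + 1) i = r * Ln d n 0 + Nn d n (i + 1) := by
          rw [Nn_succ, Tw_lt _ _ _ h', hr]
        rw [eN]
        constructor
        · have : a * Ln d (n + 1) i = a * Ln d n 0 + a * Ln d n (i + 1) := by rw [eL]; ring
          linarith
        · have : b * Ln d (n + 1) i = b * Ln d n 0 + b * Ln d n (i + 1) := by rw [eL]; ring
          linarith
      · obtain rfl : i = d - 1 := by omega
        have h1 := h (d - 1) (by omega)
        have eL : Ln d (n + 1) (d - 1) = Ln d n 0 + 2 * Ln d n (d - 1) := by rw [Ln_succ, Tw_last]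
        have eN : Nn d (n + 1) (d - 1) = r * Ln d n 0 + 2 * Nn d n (d - 1) := by
          rw [Nn_succ, Tw_last, hr]
        rw [eN]
        constructor
        · have : a * Ln d (n + 1) (d - 1) = a * Ln d n 0 + 2 * (a * Ln d n (d - 1)) := by
            rw [eL]; ring
          linarith
        · have : b * Ln d (n + 1) (d - 1) = b * Ln d n 0 + 2 * (b * Ln d n (d - 1)) := by
            rw [eL]; ring
          linarith

/-- Length of the projection of the prefix of length `m`. -/
def Bp (u : ℕ → ℕ) (m : ℕ) : ℕ := ∑ t ∈ Finset.range m, (u t + 1)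

lemma Bp_succ (u : ℕ → ℕ) (m : ℕ) : Bp u (m + 1) = Bp u m + (u m + 1) :=
  Finset.sum_range_succ _ _

lemma Bp_strictMono (u : ℕ → ℕ) : StrictMono (Bp u) :=
  strictMono_nat_of_lt_succ fun m => by rw [Bp_succ]; omega

lemma Sw_comb (u : ℕ → ℕ) (a b : ℝ) (m : ℕ) :
    Sw u (fun i => a * ((i : ℝ) + 1) + b * 1) m = a * Bp u m + b * m := by
  induction m with
  | zero => simp [Sw, Bp]
  | succ m ih => rw [Sw_succ, ih, Bp_succ]; push_cast; ring

lemma uniform_freq (d : ℕ) (hd : 3 ≤ d) (u : ℕ → ℕ) (hu : IsPhiFixed d u) (ε : ℝ) (hε : 0 < ε) :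
    ∃ a b C : ℝ, 1 ≤ a ∧ a ≤ b ∧ b - a ≤ ε ∧ 0 ≤ C ∧ ∀ j k : ℕ,
      a * k - C ≤ (Bp u (j + k) : ℝ) - Bp u j ∧ (Bp u (j + k) : ℝ) - Bp u j ≤ b * k + C := by
  have hd' : (3 : ℝ) ≤ d := by exact_mod_cast hd
  have hc0 : (0 : ℝ) < 1 / (3 * 2 ^ d) := by positivity
  have hc1 : (1 : ℝ) / (3 * 2 ^ d) ≤ 1 := by
    rw [div_le_one (by positivity)]
    have : (1 : ℝ) ≤ 2 ^ d := one_le_pow₀ (by norm_num)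
    linarith
  obtain ⟨n, hn⟩ := exists_pow_lt_of_lt_one (show 0 < ε / d by positivity)
    (show (1 : ℝ) - 1 / (3 * 2 ^ d) < 1 by linarith)
  obtain ⟨a, b, ha, hab, -, hdiff, h⟩ := ratio_bounds d hd n
  obtain ⟨C1, hC1⟩ := Sw_iter d hd u hu n (fun i => 1 * ((i : ℝ) + 1) + (-a) * 1) (by
    intro i hi
    rw [Tw_iter_lin d n (fun i => (i : ℝ) + 1) (fun _ => 1) 1 (-a)]
    have := (h i hi).1
    unfold Ln Nn at this
    linarith)
  obtain ⟨C2, hC2⟩ := Sw_iter d hd u hu n (fun i => (-1) * ((i : ℝ) + 1) + b * 1) (by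
    intro i hi
    rw [Tw_iter_lin d n (fun i => (i : ℝ) + 1) (fun _ => 1) (-1) b]
    have := (h i hi).2
    unfold Ln Nn at this
    linarith)
  refine ⟨a, b, max 0 (max C1 C2), ha, hab, ?_, le_max_left _ _, ?_⟩
  · rw [lt_div_iff₀ (by linarith)] at hn
    linarith
  · intro j k
    have h1 := hC1 j (j + k) (by omega)
    have h2 := hC2 j (j + k) (by omega)
    rw [Sw_comb, Sw_comb] at h1 h2
    push_cast at h1 h2
    have m1 : C1 ≤ max 0 (max C1 C2) := (le_max_left _ _).trans (le_max_right _ _)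
    have m2 : C2 ≤ max 0 (max C1 C2) := (le_max_right _ _).trans (le_max_right _ _)
    constructor <;> linarith

/-! ### The projected sequence -/

lemma flatMap_len (u : ℕ → ℕ) (m : ℕ) :
    (((List.range m).map u).flatMap piL).length = Bp u m := by
  induction m with
  | zero => simp [Bp]
  | succ m ih =>
    rw [Bp_succ, ← ih, List.range_succ]
    simp [piL]

lemma v_val (u : ℕ → ℕ) (v : ℕ → Bool)
    (hv : ∀ m : ℕ, OccursAt (((List.range m).map u).flatMap piL) v 0) (m s : ℕ) (hs : s ≤ u m) :
    v (Bp u m + s) = false ↔ s = 0 := by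
  have h := hv (m + 1)
  rw [occursAt_iff, flatMap_len] at h
  have h1 := h (Bp u m + s) (by rw [Bp_succ]; omega)
  have e : ((List.range (m + 1)).map u).flatMap piL =
      ((List.range m).map u).flatMap piL ++ piL (u m) := by
    rw [List.range_succ]; simp
  rw [e, List.getElem?_append_right (by rw [flatMap_len]; omega), flatMap_len, zero_add,
    Nat.add_sub_cancel_left] at h1
  cases s with
  | zero => simp [piL] at h1; simp [h1]
  | succ s =>
    simp only [piL, List.getElem?_cons_succ] at h1
    rw [List.getElem?_replicate, if_pos (by omega)] at h1
    have := Option.some.inj h1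
    simp [← this]

lemma v_false_iff (u : ℕ → ℕ) (v : ℕ → Bool)
    (hv : ∀ m : ℕ, OccursAt (((List.range m).map u).flatMap piL) v 0) (x : ℕ) :
    v x = false ↔ ∃ m, Bp u m = x := by
  constructor
  · intro h
    obtain ⟨m, h1, h2⟩ := exists_block (Bp u) (Bp_strictMono u) (by simp [Bp]) x
    refine ⟨m, ?_⟩
    rw [Bp_succ] at h2
    have := v_val u v hv m (x - Bp u m) (by omega)
    rw [Nat.add_sub_cancel' h1] at this
    have := this.1 h
    omega
  · rintro ⟨m, rfl⟩
    exact (v_val u v hv m 0 (by omega)).2 rfl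

lemma per_up (u : ℕ → ℕ) (v : ℕ → Bool)
    (hv : ∀ m : ℕ, OccursAt (((List.range m).map u).flatMap piL) v 0) (j p k : ℕ)
    (h : Per u j p k) :
    Per v (Bp u j) (Bp u (j + p) - Bp u j) (Bp u (j + k) - Bp u j) := by
  have hm := (Bp_strictMono u).monotone
  have hjp : Bp u j ≤ Bp u (j + p) := hm (by omega)
  have hjk : Bp u j ≤ Bp u (j + k) := hm (by omega)
  have shift : ∀ t, t + p ≤ k → Bp u (j + t + p) = Bp u (j + t) + (Bp u (j + p) - Bp u j) := by
    intro t
    induction t with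
    | zero => intro _; simp; omega
    | succ t ih =>
      intro ht
      have h1 := ih (by omega)
      have h2 := h t (by omega)
      rw [show j + (t + 1) + p = j + t + p + 1 by ring, show j + (t + 1) = j + t + 1 by ring,
        Bp_succ, Bp_succ, h1, h2]
      omega
  intro t ht
  obtain ⟨m, h1, h2⟩ := exists_block (Bp u) (Bp_strictMono u) (by simp [Bp]) (Bp u j + t)
  have hmj : j < m + 1 := (Bp_strictMono u).lt_iff_lt.1 (by omega)
  obtain ⟨q, rfl⟩ : ∃ q, m = j + q := ⟨m - j, by omega⟩
  have hkp : p ≤ k := by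
    by_contra hlt
    have : Bp u (j + k) ≤ Bp u (j + p) := hm (by omega)
    omega
  have hs := shift (k - p) (by omega)
  rw [show j + (k - p) + p = j + k by omega] at hs
  have hq : j + q < j + (k - p) := (Bp_strictMono u).lt_iff_lt.1 (by omega)
  have hsq := shift q (by omega)
  have hu := h q (by omega)
  rw [Bp_succ] at h2
  have v1 := v_val u v hv (j + q) (Bp u j + t - Bp u (j + q)) (by omega)
  have v2 := v_val u v hv (j + q + p) (Bp u j + t - Bp u (j + q)) (by rw [hu]; omega)
  rw [hsq] at v2
  rw [show Bp u (j + q) + (Bp u (j + p) - Bp u j) + (Bp u j + t - Bp u (j + q)) =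
    Bp u j + t + (Bp u (j + p) - Bp u j) by omega] at v2
  rw [Nat.add_sub_cancel' h1] at v1
  have := v1.trans v2.symm
  revert this
  cases v (Bp u j + t) <;> cases v (Bp u j + t + (Bp u (j + p) - Bp u j)) <;> simp

lemma per_down (d : ℕ) (u : ℕ → ℕ) (hud : ∀ t, u t < d) (v : ℕ → Bool)
    (hv : ∀ m : ℕ, OccursAt (((List.range m).map u).flatMap piL) v 0) (j p k : ℕ)
    (hp : 0 < p) (hk : p + d + 1 ≤ k) (h : Per v j p k) :
    ∃ m q l, 0 < q ∧ Per u m q l ∧ Bp u (m + q) = Bp u m + p ∧ k ≤ Bp u (m + l) - Bp u m + 2 * d := by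
  have hsm := Bp_strictMono u
  have h0 : Bp u 0 = 0 := by simp [Bp]
  obtain ⟨m, hm1, hm2⟩ : ∃ m, j ≤ Bp u m ∧ Bp u m ≤ j + d := by
    obtain ⟨m, h1, h2⟩ := exists_block (Bp u) hsm h0 j
    refine ⟨m + 1, h2.le, ?_⟩
    rw [Bp_succ]
    have := hud m
    omega
  obtain ⟨m1, hl1, hl2⟩ := exists_block (Bp u) hsm h0 (j + k - 1)
  have hl3 : j + k ≤ Bp u m1 + d := by
    rw [Bp_succ] at hl2
    have := hud m1
    omega
  have key : ∀ x, j ≤ x → x + p < j + k → v (x + p) = v x := by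
    intro x hx hxk
    have := h (x - j) (by omega)
    rwa [show j + (x - j) = x by omega] at this
  have hf : v (Bp u m + p) = false := by
    rw [key _ hm1 (by omega)]
    exact (v_false_iff u v hv _).2 ⟨m, rfl⟩
  obtain ⟨m', hm'⟩ := (v_false_iff u v hv _).1 hf
  have hmm' : m < m' := hsm.lt_iff_lt.1 (by omega)
  obtain ⟨q, rfl⟩ : ∃ q, m' = m + q := ⟨m' - m, by omega⟩
  have hm1' : m + q < m1 + 1 := hsm.lt_iff_lt.1 (by omega)
  have shift : ∀ t, Bp u (m + t + q) = Bp u (m + t) + p → m + t + q + 1 ≤ m1 →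
      u (m + t + q) = u (m + t) := by
    intro t e hle
    have b1 : Bp u (m + t + q + 1) ≤ j + k - 1 := (hsm.monotone hle).trans hl1
    have b2 : Bp u m ≤ Bp u (m + t) := hsm.monotone (by omega)
    rw [Bp_succ] at b1
    rcases lt_trichotomy (u (m + t + q)) (u (m + t)) with hlt | heq | hgt
    · exfalso
      have k1 := key (Bp u (m + t) + (u (m + t + q) + 1)) (by omega) (by omega)
      have k2 : v (Bp u (m + t) + (u (m + t + q) + 1) + p) = false := by
        rw [v_false_iff u v hv]
        exact ⟨m + t + q + 1, by rw [Bp_succ]; omega⟩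
      rw [k1, v_val u v hv _ _ (by omega)] at k2
      omega
    · exact heq
    · exfalso
      have k1 := key (Bp u (m + t) + (u (m + t) + 1)) (by omega) (by omega)
      have k2 : v (Bp u (m + t) + (u (m + t) + 1)) = false := by
        rw [v_false_iff u v hv]
        exact ⟨m + t + 1, by rw [Bp_succ]⟩
      rw [← k1, show Bp u (m + t) + (u (m + t) + 1) + p = Bp u (m + t + q) + (u (m + t) + 1) by
        omega, v_val u v hv _ _ (by omega)] at k2
      omega
  have all : ∀ t, m + t + q ≤ m1 → Bp u (m + t + q) = Bp u (m + t) + p := by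
    intro t
    induction t with
    | zero => intro _; simpa using hm'
    | succ t ih =>
      intro ht
      have h1 := ih (by omega)
      have h2 := shift t h1 (by omega)
      rw [show m + (t + 1) + q = m + t + q + 1 by ring, show m + (t + 1) = m + t + 1 by ring,
        Bp_succ, Bp_succ, h1, h2]
      omega
  refine ⟨m, q, m1 - m, by omega, ?_, hm', ?_⟩
  · intro t ht
    exact shift t (all t (by omega)) (by omega)
  · rw [show m + (m1 - m) = m1 by omega]
    omega

lemma Bp_lower (u : ℕ → ℕ) (j k : ℕ) : Bp u j + k ≤ Bp u (j + k) := by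
  induction k with
  | zero => simp
  | succ k ih => rw [← add_assoc j, Bp_succ]; omega

lemma Bp_upper (d : ℕ) (u : ℕ → ℕ) (hud : ∀ t, u t < d) (j k : ℕ) :
    Bp u (j + k) ≤ Bp u j + d * k := by
  induction k with
  | zero => simp
  | succ k ih =>
    have := hud (j + k)
    rw [← add_assoc, Bp_succ, Nat.mul_succ]; omega

/-! ### Comparison of exponents -/

lemma up_bound (d : ℕ) (u : ℕ → ℕ) (hud : ∀ t, u t < d) (v : ℕ → Bool)
    (hv : ∀ m : ℕ, OccursAt (((List.range m).map u).flatMap piL) v 0) (E : ℝ)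
    (hE : ∀ x ∈ expSet v 0, x ≤ E) : ∀ x ∈ expSet u 0, x ≤ d * E := by
  intro x hx
  obtain ⟨j, p, k, hp, -, hper, rfl⟩ := (mem_expSet _ _ _).1 hx
  have h1 := Bp_lower u j p
  have h2 := Bp_upper d u hud j p
  have h3 := Bp_lower u j k
  have hy := hE _ ((mem_expSet _ _ _).2 ⟨_, _, _, by omega, by omega, per_up u v hv j p k hper, rfl⟩)
  have hP : (0 : ℝ) < ((Bp u (j + p) - Bp u j : ℕ) : ℝ) := by
    have : 0 < Bp u (j + p) - Bp u j := by omega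
    exact_mod_cast this
  rw [div_le_iff₀ hP] at hy
  have hp' : (0 : ℝ) < p := by exact_mod_cast hp
  rw [div_le_iff₀ hp']
  have e1 : ((Bp u (j + p) - Bp u j : ℕ) : ℝ) ≤ d * p := by
    have : Bp u (j + p) - Bp u j ≤ d * p := by omega
    exact_mod_cast this
  have e2 : (k : ℝ) ≤ ((Bp u (j + k) - Bp u j : ℕ) : ℝ) := by
    have : k ≤ Bp u (j + k) - Bp u j := by omega
    exact_mod_cast this
  have hE0 : 0 ≤ E := zero_le_one.trans (hE 1 (one_mem_expSet v 0))
  nlinarith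

lemma down_bound (d : ℕ) (u : ℕ → ℕ) (hud : ∀ t, u t < d) (v : ℕ → Bool)
    (hv : ∀ m : ℕ, OccursAt (((List.range m).map u).flatMap piL) v 0) (E : ℝ)
    (hE : ∀ x ∈ expSet u 0, x ≤ E) : ∀ x ∈ expSet v 0, x ≤ d * E + 2 * d + 2 := by
  intro x hx
  obtain ⟨j, p, k, hp, -, hper, rfl⟩ := (mem_expSet _ _ _).1 hx
  have hE0 : 0 ≤ E := zero_le_one.trans (hE 1 (one_mem_expSet u 0))
  have hp' : (1 : ℝ) ≤ p := by exact_mod_cast hp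
  have hd0 : (0 : ℝ) ≤ d := Nat.cast_nonneg d
  have hdE : 0 ≤ (d : ℝ) * E := mul_nonneg hd0 hE0
  rw [div_le_iff₀ (by linarith)]
  by_cases hk : p + d + 1 ≤ k
  · obtain ⟨m, q, l, hq, hper', e1, e2⟩ := per_down d u hud v hv j p k hp hk hper
    have hy := hE _ ((mem_expSet _ _ _).2 ⟨_, _, _, hq, by omega, hper', rfl⟩)
    have hq' : (0 : ℝ) < q := by exact_mod_cast hq
    rw [div_le_iff₀ hq'] at hy
    have h1 := Bp_lower u m q
    have h2 := Bp_upper d u hud m l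
    have e3 : (q : ℝ) ≤ p := by
      have : q ≤ p := by omega
      exact_mod_cast this
    have e4 : (k : ℝ) ≤ d * l + 2 * d := by
      have : k ≤ d * l + 2 * d := by omega
      exact_mod_cast this
    have e5 : (d : ℝ) * l ≤ d * (E * q) := mul_le_mul_of_nonneg_left hy hd0
    have e6 : (d : ℝ) * E * q ≤ d * E * p := mul_le_mul_of_nonneg_left e3 hdE
    nlinarith
  · have : (k : ℝ) ≤ p + d := by
      have : k ≤ p + d := by omega
      exact_mod_cast this
    nlinarith

lemma up_approx (d : ℕ) (hd : 3 ≤ d) (u : ℕ → ℕ) (hu : IsPhiFixed d u) (v : ℕ → Bool)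
    (hv : ∀ m : ℕ, OccursAt (((List.range m).map u).flatMap piL) v 0) (E : ℝ)
    (hE : ∀ x ∈ expSet u 0, x ≤ E) (n : ℕ) (ε : ℝ) (hε : 0 < ε) :
    ∃ N, ∀ x ∈ expSet u N, ∃ y ∈ expSet v n, x ≤ y + ε := by
  have hE0 : 1 ≤ E := hE 1 (one_mem_expSet u 0)
  obtain ⟨a, b, C, ha, hab, hdiff, hC, hB⟩ := uniform_freq d hd u hu (ε / (2 * E)) (by positivity)
  obtain ⟨N, hN⟩ := exists_nat_ge (2 * C * (E + 1) / ε)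
  refine ⟨max n N, fun x hx => ?_⟩
  obtain ⟨j, p, k, hp, hnp, hper, rfl⟩ := (mem_expSet _ _ _).1 hx
  have hx0 := hE _ ((mem_expSet _ _ _).2 ⟨j, p, k, hp, by omega, hper, rfl⟩)
  have h1 := Bp_lower u j p
  have h3 := Bp_lower u j k
  refine ⟨_, (mem_expSet _ _ _).2 ⟨_, _, _, by omega, ?_, per_up u v hv j p k hper, rfl⟩, ?_⟩
  · have := le_max_left n N; omega
  have hP : (p : ℝ) ≤ ((Bp u (j + p) - Bp u j : ℕ) : ℝ) := by
    have : p ≤ Bp u (j + p) - Bp u j := by omega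
    exact_mod_cast this
  have hp' : (0 : ℝ) < p := by exact_mod_cast hp
  have hpN : (N : ℝ) ≤ p := by
    have : N ≤ p := (le_max_right n N).trans hnp
    exact_mod_cast this
  have hk := (hB j k).1
  have hpp := (hB j p).2
  rw [Nat.cast_sub (by omega)] at hP ⊢
  rw [Nat.cast_sub (by omega)]
  set P : ℝ := (Bp u (j + p) : ℝ) - Bp u j with hPdef
  set K : ℝ := (Bp u (j + k) : ℝ) - Bp u j with hKdef
  rw [div_le_iff₀ hp'] at hx0 ⊢
  have hP0 : 0 < P := by linarith
  have hCe : 2 * C * (E + 1) ≤ ε * p := by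
    have := hN.trans hpN
    rwa [div_le_iff₀ hε, mul_comm (p : ℝ)] at this
  have hbe : 2 * E * (b - a) ≤ ε := by
    rw [le_div_iff₀ (by positivity)] at hdiff
    linarith
  have hk0 : (0 : ℝ) ≤ k := Nat.cast_nonneg k
  have goal : (k : ℝ) * P ≤ (K + ε * P) * p := by
    have g1 : (k : ℝ) * P ≤ k * (b * p + C) := mul_le_mul_of_nonneg_left hpp hk0
    have g2 : (a * k - C) * p ≤ K * p := mul_le_mul_of_nonneg_right hk hp'.le
    have g3 : ε * p * p ≤ ε * P * p := by gcongr
    have g4 : (b - a) * k * p ≤ (b - a) * (E * p) * p := by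
      have : 0 ≤ b - a := by linarith
      gcongr
    have g5 : 2 * E * (b - a) * (p * p) ≤ ε * (p * p) :=
      mul_le_mul_of_nonneg_right hbe (by positivity)
    have g6 : C * k ≤ C * (E * p) := mul_le_mul_of_nonneg_left hx0 hC
    have g7 : 2 * C * (E + 1) * p ≤ ε * p * p := mul_le_mul_of_nonneg_right hCe hp'.le
    nlinarith
  have : K / P + ε = (K + ε * P) / P := by field_simp
  rw [this, div_mul_eq_mul_div, le_div_iff₀ hP0]
  exact goal

lemma down_approx (d : ℕ) (hd : 3 ≤ d) (u : ℕ → ℕ) (hu : IsPhiFixed d u) (v : ℕ → Bool)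
    (hv : ∀ m : ℕ, OccursAt (((List.range m).map u).flatMap piL) v 0) (E : ℝ)
    (hE : ∀ x ∈ expSet v 0, x ≤ E) (n : ℕ) (ε : ℝ) (hε : 0 < ε) :
    ∃ N, ∀ x ∈ expSet v N, ∃ y ∈ expSet u n, x ≤ y + ε := by
  have hud := u_lt d hd u hu
  have hE0 : 1 ≤ E := hE 1 (one_mem_expSet v 0)
  obtain ⟨a, b, C, ha, hab, hdiff, hC, hB⟩ := uniform_freq d hd u hu (ε / (2 * E)) (by positivity)
  obtain ⟨N, hN⟩ := exists_nat_ge (2 * (C + 2 * d) * (E + 1) * d / ε)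
  have hd0 : (3 : ℝ) ≤ d := by exact_mod_cast hd
  refine ⟨max (d * n) N, fun x hx => ?_⟩
  obtain ⟨j, p, k, hp, hnp, hper, rfl⟩ := (mem_expSet _ _ _).1 hx
  have hx0 := hE _ ((mem_expSet _ _ _).2 ⟨j, p, k, hp, by omega, hper, rfl⟩)
  have hp' : (0 : ℝ) < p := by exact_mod_cast hp
  have hpN : (N : ℝ) ≤ p := by
    have : N ≤ p := (le_max_right _ N).trans hnp
    exact_mod_cast this
  have hCe : 2 * (C + 2 * d) * (E + 1) * d ≤ ε * p := by
    have := hN.trans hpN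
    rwa [div_le_iff₀ hε, mul_comm (p : ℝ)] at this
  rw [div_le_iff₀ hp'] at hx0
  by_cases hk : p + d + 1 ≤ k
  swap
  · refine ⟨1, one_mem_expSet u n, ?_⟩
    rw [div_le_iff₀ hp']
    have : (k : ℝ) ≤ p + d := by
      have : k ≤ p + d := by omega
      exact_mod_cast this
    have t1 : (1 : ℝ) ≤ 2 * (C + 2 * d) * (E + 1) := by nlinarith
    have t2 : (d : ℝ) ≤ 2 * (C + 2 * d) * (E + 1) * d := by nlinarith
    linarith
  obtain ⟨m, q, l, hq, hper', e1, e2⟩ := per_down d u hud v hv j p k hp hk hper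
  have hq' : (0 : ℝ) < q := by exact_mod_cast hq
  have hnq : n ≤ q := by
    have h2 := Bp_upper d u hud m q
    have h3 : d * n ≤ d * q := by
      have := le_max_left (d * n) N
      omega
    exact Nat.le_of_mul_le_mul_left h3 (by omega)
  refine ⟨_, (mem_expSet _ _ _).2 ⟨_, _, _, hq, hnq, hper', rfl⟩, ?_⟩
  have hl := (hB m l).2
  have hqq := (hB m q).1
  have h3 := Bp_lower u m l
  have e2' : (k : ℝ) ≤ (Bp u (m + l) : ℝ) - Bp u m + 2 * d := by
    have : k + Bp u m ≤ Bp u (m + l) + 2 * d := by omega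
    have : (k : ℝ) + Bp u m ≤ Bp u (m + l) + 2 * d := by exact_mod_cast this
    linarith
  have e1' : (Bp u (m + q) : ℝ) - Bp u m = p := by rw [e1]; push_cast; ring
  rw [e1'] at hqq
  have hk1 : (k : ℝ) ≤ b * l + (C + 2 * d) := by linarith
  set D : ℝ := C + 2 * d with hD
  have hqp : a * q ≤ p + D := by linarith
  have hbe : 2 * E * (b - a) ≤ ε := by
    rw [le_div_iff₀ (by positivity)] at hdiff
    linarith
  have hk0 : (0 : ℝ) ≤ k := Nat.cast_nonneg k
  have hD0 : 0 ≤ D := by linarith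
  have hb : 1 ≤ b := by linarith
  have : (l : ℝ) / q + ε = (l + ε * q) / q := by field_simp
  rw [this, div_le_div_iff₀ hp' hq']
  have g1 : (k : ℝ) * p ≤ b * l * p + D * p := by nlinarith
  have g2 : a * (k * q) ≤ k * p + D * k := by nlinarith
  have hqp1 : (p : ℝ) ≤ d * q := by
    have h2 := Bp_upper d u hud m q
    have : p ≤ d * q := by omega
    exact_mod_cast this
  have hDq : 2 * D * (E + 1) ≤ ε * q := by
    have t1 : ε * p ≤ ε * (d * q) := mul_le_mul_of_nonneg_left hqp1 hε.le
    have t2 : 2 * D * (E + 1) * d ≤ ε * q * d := by linarith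
    exact le_of_mul_le_mul_right t2 (by linarith)
  have g3 : (b - a) * (k * q) ≤ (b - a) * ((E * p) * q) := by
    have : 0 ≤ b - a := by linarith
    gcongr
  have g4 : 2 * E * (b - a) * (p * q) ≤ ε * (p * q) :=
    mul_le_mul_of_nonneg_right hbe (by positivity)
  have g5 : D * k ≤ D * (E * p) := mul_le_mul_of_nonneg_left hx0 hD0
  have g6 : 2 * D * (E + 1) * p ≤ ε * q * p := mul_le_mul_of_nonneg_right hDq hp'.le
  have g7 : ε * (p * q) ≤ b * (ε * (p * q)) := le_mul_of_one_le_left (by positivity) hb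
  have g8 : b * ((k : ℝ) * q) ≤ b * ((l + ε * q) * p) := by
    have r1 : (b - a) * ((E * p) * q) = E * (b - a) * (p * q) := by ring
    have r2 : b * ((l + ε * q) * p) = b * l * p + b * (ε * (p * q)) := by ring
    have r3 : b * ((k : ℝ) * q) = a * (k * q) + (b - a) * (k * q) := by ring
    nlinarith
  exact le_of_mul_le_mul_left g8 (by linarith)

lemma iInf_le_of_approx (X Y : ℕ → Set ℝ)
    (h : ∀ n : ℕ, ∀ ε : ℝ, 0 < ε → ∃ N, ∀ x ∈ X N, ∃ y ∈ Y n, x ≤ y + ε) :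
    (⨅ n : ℕ, sSup ((fun x : ℝ => (x : EReal)) '' X n)) ≤
      ⨅ n : ℕ, sSup ((fun x : ℝ => (x : EReal)) '' Y n) := by
  refine le_iInf fun n => ?_
  by_contra hlt
  push Not at hlt
  obtain ⟨r1, h1, h2⟩ := EReal.lt_iff_exists_real_btwn.1 hlt
  obtain ⟨r2, h3, h4⟩ := EReal.lt_iff_exists_real_btwn.1 h2
  have h12 : r1 < r2 := EReal.coe_lt_coe_iff.1 h3
  obtain ⟨N, hN⟩ := h n (r2 - r1) (by linarith)
  have hle : sSup ((fun x : ℝ => (x : EReal)) '' X N) ≤ (r2 : EReal) := by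
    apply sSup_le
    rintro _ ⟨x, hx, rfl⟩
    obtain ⟨y, hy, hxy⟩ := hN x hx
    have : (y : EReal) < r1 := lt_of_le_of_lt (le_sSup (Set.mem_image_of_mem (fun x : ℝ => (x : EReal)) hy)) h1
    have := EReal.coe_lt_coe_iff.1 this
    exact EReal.coe_le_coe_iff.2 (by linarith)
  exact absurd (h4.trans_le (iInf_le _ N)) (not_lt.2 hle)

lemma critExp_ne_top_iff (u : ℕ → A) :
    critExp u ≠ ⊤ ↔ ∃ E : ℝ, ∀ x ∈ expSet u 0, x ≤ E := by
  unfold critExp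
  constructor
  · intro h
    obtain ⟨r, h1, -⟩ := EReal.lt_iff_exists_real_btwn.1 (lt_top_iff_ne_top.2 h)
    exact ⟨r, fun x hx => EReal.coe_le_coe_iff.1 ((le_sSup (Set.mem_image_of_mem (fun x : ℝ => (x : EReal)) hx)).trans h1.le)⟩
  · rintro ⟨E, hE⟩
    apply ne_of_lt
    refine lt_of_le_of_lt (b := (E : EReal)) (sSup_le ?_) (EReal.coe_lt_top E)
    rintro _ ⟨x, hx, rfl⟩
    exact EReal.coe_le_coe_iff.2 (hE x hx)

/-- For `d ≥ 3`, the projection `π : i ↦ a bⁱ` preserves the asymptotic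
critical exponent: `E*(π(u_d)) = E*(u_d)`. -/
theorem statement5 (d : ℕ) (hd : 3 ≤ d) (u : ℕ → ℕ) (hu : IsPhiFixed d u)
    (v : ℕ → Bool) (hv : ∀ m : ℕ, OccursAt (((List.range m).map u).flatMap piL) v 0) :
    acritExp v = acritExp u := by
  have hud := u_lt d hd u hu
  have hiff : critExp v ≠ ⊤ ↔ critExp u ≠ ⊤ := by
    rw [critExp_ne_top_iff, critExp_ne_top_iff]
    exact ⟨fun ⟨E, hE⟩ => ⟨_, up_bound d u hud v hv E hE⟩,
      fun ⟨E, hE⟩ => ⟨_, down_bound d u hud v hv E hE⟩⟩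
  unfold acritExp
  by_cases h : critExp u = ⊤
  · have h' : critExp v = ⊤ := by
      by_contra h'
      exact hiff.1 h' h
    rw [if_pos h, if_pos h']
  · have h' : critExp v ≠ ⊤ := hiff.2 h
    rw [if_neg h, if_neg h']
    obtain ⟨E, hE⟩ := (critExp_ne_top_iff u).1 h
    obtain ⟨E', hE'⟩ := (critExp_ne_top_iff v).1 h'
    exact le_antisymm
      (iInf_le_of_approx _ _ (down_approx d hd u hu v hv E' hE'))
      (iInf_le_of_approx _ _ (up_approx d hd u hu v hv E hE))
end RichRT
end

section
/- Let d ≥ 3 and let u_d be the fixed point of φ_d. Let i, j, k, l ∈ {0,…,d−1} be letters with i ≠ j, k ≠ l, and max{i,j} ≤ min{k,l}. Then no finite word w over {0,…,d−1} satisfies that both iwk and jwl belong to the language L(u_d). -/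
namespace RichRT

variable {A : Type*}

/-- Start position of the image block of the `n`-th letter. -/
def bpos (d : ℕ) (u : ℕ → ℕ) : ℕ → ℕ
  | 0 => 0
  | n + 1 => bpos d u n + (if u n < d - 1 then 2 else 3)

lemma occursAt_get {w : List ℕ} {u : ℕ → ℕ} {j : ℕ} (h : OccursAt w u j) (t : ℕ)
    (ht : t < w.length) : w[t] = u (j + t) := by
  have h2 : w[t]? = ((List.range w.length).map fun t => u (j + t))[t]? :=
    congrArg (fun x : List ℕ => x[t]?) h
  rw [List.getElem?_eq_getElem ht] at h2
  simpa [ht] using h2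

lemma phi_prefix_length (d : ℕ) (u : ℕ → ℕ) (n : ℕ) :
    (phiW d ((List.range n).map u)).length = bpos d u n := by
  induction n with
  | zero => simp [phiW, bpos]
  | succ n ih =>
    rw [List.range_succ, List.map_append, phiW, List.flatMap_append, List.length_append]
    rw [phiW] at ih
    rw [ih, bpos]
    simp only [List.map_cons, List.map_nil, List.flatMap_cons, List.flatMap_nil,
      List.append_nil, phiL]
    split_ifs <;> simp

lemma block_letter (d : ℕ) (u : ℕ → ℕ) (hu : IsPhiFixed d u) (n r : ℕ)
    (hr : r < (phiL d (u n)).length) : u (bpos d u n + r) = (phiL d (u n))[r] := by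
  have h := hu.2 (n + 1)
  have e : phiW d ((List.range (n + 1)).map u)
      = phiW d ((List.range n).map u) ++ phiL d (u n) := by
    rw [List.range_succ, List.map_append, phiW, List.flatMap_append]
    simp [phiW]
  rw [e] at h
  have hl := phi_prefix_length d u n
  have h2 := occursAt_get h (bpos d u n + r) (by rw [List.length_append, hl]; omega)
  rw [zero_add] at h2
  rw [← h2, List.getElem_append_right (by omega)]
  congr 1
  omega

lemma block0 (d : ℕ) (u : ℕ → ℕ) (hu : IsPhiFixed d u) (n : ℕ) : u (bpos d u n) = 0 := by
  have h := block_letter d u hu n 0 (by unfold phiL; split_ifs <;> simp)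
  rw [add_zero] at h
  rw [h]
  unfold phiL
  split_ifs <;> rfl

lemma block1 (d : ℕ) (u : ℕ → ℕ) (hu : IsPhiFixed d u) (n : ℕ) :
    u (bpos d u n + 1) = if u n < d - 1 then u n + 1 else d - 1 := by
  rw [block_letter d u hu n 1 (by unfold phiL; split_ifs <;> simp)]
  unfold phiL
  split_ifs <;> rfl

lemma block2 (d : ℕ) (u : ℕ → ℕ) (hu : IsPhiFixed d u) (n : ℕ) (hn : ¬ u n < d - 1) :
    u (bpos d u n + 2) = d - 1 := by
  rw [block_letter d u hu n 2 (by unfold phiL; rw [if_neg hn]; simp)]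
  simp [phiL, hn]

lemma bpos_succ (d : ℕ) (u : ℕ → ℕ) (n : ℕ) :
    bpos d u (n + 1) = bpos d u n + (if u n < d - 1 then 2 else 3) := rfl

lemma bpos_cover (d : ℕ) (u : ℕ → ℕ) (p : ℕ) :
    ∃ n, bpos d u n ≤ p ∧ p < bpos d u (n + 1) := by
  induction p with
  | zero => exact ⟨0, by simp [bpos], by rw [bpos_succ]; split_ifs <;> omega⟩
  | succ p ih =>
    obtain ⟨n, h1, h2⟩ := ih
    by_cases h : p + 1 < bpos d u (n + 1)
    · exact ⟨n, by omega, h⟩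
    · refine ⟨n + 1, by omega, ?_⟩
      rw [bpos_succ d u (n + 1)]
      split_ifs <;> omega

lemma bpos_add (d : ℕ) (u : ℕ → ℕ) (n s : ℕ) : bpos d u n + 2 * s ≤ bpos d u (n + s) := by
  induction s with
  | zero => simp
  | succ s ih =>
    rw [← add_assoc, bpos_succ]
    split_ifs <;> omega

/-- Positions come in three kinds. -/
lemma position_cases (d : ℕ) (u : ℕ → ℕ) (hu : IsPhiFixed d u) (p : ℕ) :
    ∃ n, p = bpos d u n ∨ p = bpos d u n + 1 ∨ (p = bpos d u n + 2 ∧ ¬ u n < d - 1) := by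
  obtain ⟨n, h1, h2⟩ := bpos_cover d u p
  refine ⟨n, ?_⟩
  rw [bpos_succ] at h2
  split_ifs at h2 <;> omega

lemma letter_le (d : ℕ) (u : ℕ → ℕ) (hu : IsPhiFixed d u) (p : ℕ) : u p ≤ d - 1 := by
  obtain ⟨n, h | h | ⟨h, hn⟩⟩ := position_cases d u hu p <;> rw [h]
  · rw [block0 d u hu]; omega
  · rw [block1 d u hu]; split_ifs <;> omega
  · rw [block2 d u hu n hn]

lemma zero_pos (d : ℕ) (hd : 3 ≤ d) (u : ℕ → ℕ) (hu : IsPhiFixed d u) (p : ℕ) (hp : u p = 0) :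
    ∃ n, p = bpos d u n := by
  obtain ⟨n, h | h | ⟨h, hn⟩⟩ := position_cases d u hu p
  · exact ⟨n, h⟩
  · rw [h, block1 d u hu] at hp; split_ifs at hp; omega
  · rw [h, block2 d u hu n hn] at hp; omega

lemma after_zero (d : ℕ) (hd : 3 ≤ d) (u : ℕ → ℕ) (hu : IsPhiFixed d u) (p : ℕ) (hp : u p = 0) :
    u (p + 1) ≠ 0 := by
  obtain ⟨n, rfl⟩ := zero_pos d hd u hu p hp
  rw [block1 d u hu]
  split_ifs <;> omega

lemma after_nonzero (d : ℕ) (u : ℕ → ℕ) (hu : IsPhiFixed d u) (p : ℕ)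
    (hp : u p ≠ 0) : u (p + 1) = 0 ∨ (u p = d - 1 ∧ u (p + 1) = d - 1) := by
  obtain ⟨n, h | h | ⟨h, hn⟩⟩ := position_cases d u hu p
  · rw [h, block0 d u hu] at hp; omega
  · by_cases hn : u n < d - 1
    · left
      have := block0 d u hu (n + 1)
      rw [bpos_succ, if_pos hn] at this
      rw [h]; exact this
    · right
      subst h
      rw [block1 d u hu, if_neg hn]
      exact ⟨rfl, block2 d u hu n hn⟩
  · left
    have := block0 d u hu (n + 1)
    rw [bpos_succ, if_neg hn] at this
    rw [h]; exact this

lemma last_letter (d : ℕ) (u : ℕ → ℕ) (hu : IsPhiFixed d u) (p n : ℕ)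
    (h : p + 1 = bpos d u (n + 1)) : u p = if u n < d - 1 then u n + 1 else d - 1 := by
  rw [bpos_succ] at h
  by_cases hn : u n < d - 1
  · rw [if_pos hn] at h
    have : p = bpos d u n + 1 := by omega
    rw [this, block1 d u hu]
  · rw [if_neg hn] at h
    have : p = bpos d u n + 2 := by omega
    rw [this, block2 d u hu n hn, if_neg hn]

/-- If two blocks agree up to and including the next letter, the preimages are equal. -/
lemma block_inj (d : ℕ) (hd : 3 ≤ d) (u : ℕ → ℕ) (hu : IsPhiFixed d u) (n m : ℕ)
    (h : ∀ t, bpos d u n + t ≤ bpos d u (n + 1) → u (bpos d u n + t) = u (bpos d u m + t)) :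
    u n = u m := by
  have l1 := letter_le d u hu n
  have l2 := letter_le d u hu m
  have b1 := block1 d u hu n
  have b1' := block1 d u hu m
  have z := block0 d u hu (n + 1)
  have z' := block0 d u hu (m + 1)
  rw [bpos_succ] at h z z'
  have h1 := h 1 (by split_ifs <;> omega)
  have h2 := h 2 (by split_ifs <;> omega)
  by_cases hn : u n < d - 1 <;> by_cases hm : u m < d - 1
  · simp only [hn, hm, if_true] at *; omega
  · have := block2 d u hu m hm
    simp only [hn, if_true] at *; omega
  · have := block2 d u hu n hn
    simp only [hm, if_true] at *; omega
  · omega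

lemma sync (d : ℕ) (hd : 3 ≤ d) (u : ℕ → ℕ) (hu : IsPhiFixed d u) (n m L : ℕ)
    (h : ∀ t < L, u (bpos d u n + t) = u (bpos d u m + t)) (s : ℕ)
    (hs : bpos d u (n + s) < bpos d u n + L) :
    bpos d u (n + s) + bpos d u m = bpos d u (m + s) + bpos d u n ∧
      ∀ t < s, u (n + t) = u (m + t) := by
  induction s with
  | zero => exact ⟨by simp [add_comm], by simp⟩
  | succ s ih =>
    rw [← add_assoc] at hs
    have hlt : bpos d u (n + s) < bpos d u (n + s + 1) := by
      rw [bpos_succ]; split_ifs <;> omega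
    obtain ⟨h1, h2⟩ := ih (by omega)
    have g1 := bpos_add d u n s
    have key : u (n + s) = u (m + s) := by
      apply block_inj d hd u hu
      intro t ht
      have := h (bpos d u (n + s) + t - bpos d u n) (by omega)
      rw [show bpos d u n + (bpos d u (n + s) + t - bpos d u n) = bpos d u (n + s) + t by omega,
        show bpos d u m + (bpos d u (n + s) + t - bpos d u n) = bpos d u (m + s) + t by omega]
        at this
      exact this
    refine ⟨?_, ?_⟩
    · rw [← add_assoc, ← add_assoc, bpos_succ, bpos_succ, key]
      omega
    · intro t ht
      rcases Nat.lt_succ_iff_lt_or_eq.mp ht with h3 | rfl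
      · exact h2 t h3
      · exact key

lemma index_form (d : ℕ) (hd : 3 ≤ d) (u : ℕ → ℕ) (hu : IsPhiFixed d u) (L : ℕ) :
    ∀ p q : ℕ, (∀ t < L, u (p + 1 + t) = u (q + 1 + t)) → u p ≠ u q →
      u (p + 1 + L) ≠ u (q + 1 + L) →
      u p ≤ u (p + 1 + L) → u p ≤ u (q + 1 + L) →
      u q ≤ u (p + 1 + L) → u q ≤ u (q + 1 + L) → False := by
  induction L using Nat.strong_induction_on with
  | _ L IH =>
  intro p q h hpq hkl a1 a2 a3 a4
  have lk := letter_le d u hu (p + 1 + L)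
  have ll := letter_le d u hu (q + 1 + L)
  have np := after_nonzero d u hu p
  have nq := after_nonzero d u hu q
  rcases Nat.eq_zero_or_pos L with rfl | hL
  · simp only [add_zero] at *
    omega
  have h0 := h 0 hL
  simp only [add_zero] at h0
  have hz : u (p + 1) = 0 := by
    by_contra hz
    omega
  have hz' : u (q + 1) = 0 := by omega
  have p0 : u p ≠ 0 := fun e => after_zero d hd u hu p e hz
  have q0 : u q ≠ 0 := fun e => after_zero d hd u hu q e hz'
  have he := h (L - 1) (by omega)
  have ep : p + 1 + L = p + 1 + (L - 1) + 1 := by omega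
  have eq : q + 1 + L = q + 1 + (L - 1) + 1 := by omega
  have hw : u (p + 1 + (L - 1)) = 0 := by
    by_contra hw
    have x1 := after_nonzero d u hu _ hw
    have x2 := after_nonzero d u hu (q + 1 + (L - 1)) (by omega)
    rw [← ep] at x1
    rw [← eq] at x2
    omega
  obtain ⟨n, hn⟩ := zero_pos d hd u hu _ hz
  obtain ⟨m, hm⟩ := zero_pos d hd u hu _ hz'
  obtain ⟨r, hr⟩ := zero_pos d hd u hu _ hw
  have hmono : StrictMono (bpos d u) := strictMono_nat_of_lt_succ fun n => by
    rw [bpos_succ]; split_ifs <;> omega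
  have hnr : n ≤ r := hmono.le_iff_le.mp (by omega)
  obtain ⟨s, rfl⟩ := Nat.exists_eq_add_of_le hnr
  obtain ⟨y1, y2⟩ := sync d hd u hu n m L (by rw [← hn, ← hm]; exact h) s (by omega)
  have g := bpos_add d u n s
  have hk := block1 d u hu (n + s)
  have hl := block1 d u hu (m + s)
  rw [← hr, ← ep] at hk
  rw [show bpos d u (m + s) + 1 = q + 1 + L by omega] at hl
  obtain _ | n := n
  · simp [bpos] at hn
  obtain _ | m := m
  · simp [bpos] at hm
  have hp := last_letter d u hu p n hn
  have hq := last_letter d u hu q m hm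
  have e1 := letter_le d u hu (n + 1 + s)
  have e2 := letter_le d u hu (m + 1 + s)
  refine IH s (by omega) n m y2 ?_ ?_ ?_ ?_ ?_ ?_ <;>
    split_ifs at hp hq hk hl <;> omega

lemma occurs_index {u : ℕ → ℕ} {i k p : ℕ} {w : List ℕ} (h : OccursAt (i :: (w ++ [k])) u p) :
    u p = i ∧ u (p + 1 + w.length) = k ∧ ∀ t, (ht : t < w.length) → u (p + 1 + t) = w[t] := by
  refine ⟨?_, ?_, ?_⟩
  · have := occursAt_get h 0 (by simp)
    simpa using this.symm
  · have := occursAt_get h (w.length + 1) (by simp)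
    rw [show p + 1 + w.length = p + (w.length + 1) by omega, ← this]
    simp
  · intro t ht
    have := occursAt_get h (t + 1) (by simp; omega)
    rw [show p + 1 + t = p + (t + 1) by omega, ← this]
    simp [ht]

/-- Let `d ≥ 3` and `i,j,k,l` be letters with `i ≠ j`, `k ≠ l` and
`max{i,j} ≤ min{k,l}`. Then no word `w` satisfies that both `iwk` and `jwl` are factors
of the fixed point `u_d`. -/
theorem statement6 (d : ℕ) (hd : 3 ≤ d) (u : ℕ → ℕ) (hu : IsPhiFixed d u)
    (i j k l : ℕ) (hi : i < d) (hj : j < d) (hk : k < d) (hl : l < d)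
    (hij : i ≠ j) (hkl : k ≠ l) (hm : max i j ≤ min k l) (w : List ℕ) :
    ¬ (IsFactorS (i :: (w ++ [k])) u ∧ IsFactorS (j :: (w ++ [l])) u) := by
  rintro ⟨⟨p, hp⟩, ⟨q, hq⟩⟩
  obtain ⟨p1, p2, p3⟩ := occurs_index hp
  obtain ⟨q1, q2, q3⟩ := occurs_index hq
  refine index_form d hd u hu w.length p q (fun t ht => (p3 t ht).trans (q3 t ht).symm)
    ?_ ?_ ?_ ?_ ?_ ?_ <;> omega
end RichRT
end

section
/- Let d ≥ 3. For every bispecial factor w of u_d, both (d−1)w and w(d−1) belong to L(u_d); moreover, the only bispecial factors of u_d with more than two left extensions or more than two right extensions are the words F_0, F_1, …, F_{d−3}. -/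
namespace RichRT

variable {A : Type*}

/-! ### The language as the set of factors of the words `F_n` -/

/-- Words that are factors of some `F_n`. -/
def LL (d : ℕ) (w : List ℕ) : Prop := ∃ n, w <:+: Fword d n

/-- The letter obtained as last (and second) letter of `φ(i)`. -/
def ee (d i : ℕ) : ℕ := if i < d - 1 then i + 1 else d - 1

lemma phiW_nil (d : ℕ) : phiW d [] = [] := rfl

lemma phiW_cons (d a : ℕ) (w : List ℕ) : phiW d (a :: w) = phiL d a ++ phiW d w := by
  simp [phiW]

lemma phiW_append (d : ℕ) (v w : List ℕ) : phiW d (v ++ w) = phiW d v ++ phiW d w := by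
  simp [phiW]

lemma phiW_zero_head (d : ℕ) (w : List ℕ) : ∃ t, phiW d w ++ [0] = 0 :: t := by
  cases w with
  | nil => exact ⟨[], rfl⟩
  | cons a w =>
    rw [phiW_cons, phiL]
    split_ifs <;> simp

lemma phiL_tail (d : ℕ) (hd : 3 ≤ d) (a : ℕ) :
    ∃ r, phiL d a = 0 :: ee d a :: r ∧ (r = [] ∧ a < d - 1 ∨ r = [d - 1] ∧ d - 1 ≤ a) := by
  unfold phiL ee
  split_ifs with h
  · exact ⟨[], rfl, Or.inl ⟨rfl, h⟩⟩
  · exact ⟨[d-1], rfl, Or.inr ⟨rfl, by omega⟩⟩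

lemma ee_pos (d : ℕ) (hd : 3 ≤ d) (a : ℕ) : ee d a ≠ 0 := by
  unfold ee; split_ifs <;> omega

lemma LL_infix {d : ℕ} {v w : List ℕ} (h : LL d w) (hv : v <:+: w) : LL d v := by
  obtain ⟨n, hn⟩ := h
  exact ⟨n, hv.trans hn⟩

lemma LL_tail {d a : ℕ} {w : List ℕ} (h : LL d (a :: w)) : LL d w :=
  LL_infix h (List.infix_cons (List.infix_refl _))

lemma LL_mid {d : ℕ} {p w s : List ℕ} (h : LL d (p ++ w ++ s)) : LL d w :=
  LL_infix h ⟨p, s, rfl⟩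

lemma LL_phi {d : ℕ} {w : List ℕ} (h : LL d w) : LL d (phiW d w ++ [0]) := by
  obtain ⟨n, p, s, hn⟩ := h
  obtain ⟨t, ht⟩ := phiW_zero_head d s
  refine ⟨n + 1, phiW d p, t, ?_⟩
  rw [Fword, ← hn, phiW_append, phiW_append]
  simp [ht]

lemma phiW_reverse (d : ℕ) (w : List ℕ) :
    (phiW d w ++ [0]).reverse = phiW d w.reverse ++ [0] := by
  induction w with
  | nil => rfl
  | cons a w ih =>
    rw [phiW_cons, List.reverse_cons, phiW_append, List.append_assoc, List.reverse_append, ih,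
      phiW_cons, phiW_nil]
    unfold phiL
    split_ifs <;> simp

lemma Fword_reverse (d n : ℕ) : (Fword d n).reverse = Fword d n := by
  induction n with
  | zero => rfl
  | succ n ih => rw [Fword, phiW_reverse, ih]

lemma LL_reverse {d : ℕ} {w : List ℕ} (h : LL d w) : LL d w.reverse := by
  obtain ⟨n, hn⟩ := h
  refine ⟨n, ?_⟩
  rw [← Fword_reverse]
  exact List.reverse_infix.mpr hn

lemma LL_reverse_iff {d : ℕ} {w : List ℕ} : LL d w.reverse ↔ LL d w :=
  ⟨fun h => by simpa using LL_reverse h, LL_reverse⟩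

lemma LL_rcons {d a : ℕ} {w : List ℕ} : LL d (w ++ [a]) ↔ LL d (a :: w.reverse) := by
  rw [← LL_reverse_iff]; simp

lemma LL_rcons' {d a : ℕ} {w : List ℕ} : LL d (w.reverse ++ [a]) ↔ LL d (a :: w) := by
  rw [LL_rcons]; simp

lemma Fword_lt (d : ℕ) (hd : 3 ≤ d) (n : ℕ) : ∀ x ∈ Fword d n, x < d := by
  induction n with
  | zero => simp [Fword]
  | succ n ih =>
    intro x hx
    rw [Fword] at hx
    simp only [phiW, List.mem_append, List.mem_flatMap, List.mem_singleton] at hx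
    rcases hx with ⟨a, ha, hx⟩ | rfl
    · unfold phiL at hx
      split_ifs at hx <;> simp at hx <;> omega
    · omega

lemma LL_lt {d : ℕ} (hd : 3 ≤ d) {w : List ℕ} (h : LL d w) : ∀ x ∈ w, x < d := by
  obtain ⟨n, hn⟩ := h
  intro x hx
  exact Fword_lt d hd n x (hn.subset hx)

lemma LL_nil (d : ℕ) : LL d [] := ⟨0, List.infix_refl _⟩

lemma LL_letter (d : ℕ) (i : ℕ) (hi : i < d) : LL d [i] := by
  induction i with
  | zero => exact ⟨1, List.infix_refl _⟩
  | succ i ih =>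
    have h := LL_phi (ih (by omega))
    rw [phiW_cons, phiL, if_pos (by omega)] at h
    exact LL_infix h ⟨[0], [0], rfl⟩

lemma LL_F_both (d : ℕ) (hd : 3 ≤ d) (n : ℕ) :
    LL d ((d - 1) :: (Fword d n ++ [d - 1])) := by
  induction n with
  | zero =>
    have h := LL_phi (LL_letter d (d - 1) (by omega))
    rw [phiW_cons, phiL, if_neg (by omega)] at h
    exact LL_infix h ⟨[0], [0], rfl⟩
  | succ n ih =>
    have h := LL_phi ih
    rw [phiW_cons, phiW_append, phiW_cons, phiL, if_neg (by omega)] at h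
    refine LL_infix h ⟨[0, d - 1], [d - 1, 0], ?_⟩
    simp [Fword, phiW_nil]

lemma LL_ext_both {d : ℕ} (hd : 3 ≤ d) {w : List ℕ} (h : LL d w) :
    ∃ a b, LL d (a :: (w ++ [b])) := by
  obtain ⟨n, p, s, hn⟩ := h
  have h2 := LL_F_both d hd n
  rw [← hn] at h2
  obtain ⟨p', a, hp⟩ : ∃ p' a, (d - 1) :: p = p' ++ [a] := by
    rcases List.eq_nil_or_concat ((d - 1) :: p) with h | ⟨p', a, h⟩
    · simp at h
    · exact ⟨p', a, by simpa using h⟩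
  obtain ⟨b, s', hs⟩ : ∃ b s', s ++ [d - 1] = b :: s' := by
    cases s with
    | nil => exact ⟨_, _, rfl⟩
    | cons b s' => exact ⟨_, _, rfl⟩
  refine ⟨a, b, LL_infix h2 ⟨p', s', ?_⟩⟩
  have : (d - 1) :: (p ++ w ++ s ++ [d - 1]) = ((d - 1) :: p) ++ w ++ (s ++ [d - 1]) := by simp
  rw [this, hp, hs]; simp

lemma LL_ext_right {d : ℕ} (hd : 3 ≤ d) {w : List ℕ} (h : LL d w) : ∃ b, LL d (w ++ [b]) := by
  obtain ⟨a, b, h⟩ := LL_ext_both hd h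
  exact ⟨b, LL_tail h⟩

lemma LL_ext_left {d : ℕ} (hd : 3 ≤ d) {w : List ℕ} (h : LL d w) : ∃ a, LL d (a :: w) := by
  obtain ⟨a, b, h⟩ := LL_ext_both hd h
  exact ⟨a, LL_infix h ⟨[], [b], by simp⟩⟩

/-! ### Desubstitution -/

lemma desub_zero (d : ℕ) (hd : 3 ≤ d) (z : List ℕ) : ∀ p q, p ++ 0 :: q = phiW d z ++ [0] →
    ∃ z1 z2, z = z1 ++ z2 ∧ p = phiW d z1 ∧ 0 :: q = phiW d z2 ++ [0] := by
  induction z with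
  | nil =>
    intro p q h
    refine ⟨[], [], rfl, ?_⟩
    cases p with
    | nil => exact ⟨rfl, h⟩
    | cons a p => simp [phiW_nil] at h
  | cons a z ih =>
    intro p q h
    cases p with
    | nil => exact ⟨[], a :: z, rfl, rfl, h⟩
    | cons x p =>
      rw [phiW_cons] at h
      obtain ⟨r, hr, hr'⟩ := phiL_tail d hd a
      have he := ee_pos d hd a
      rw [hr] at h
      cases p with
      | nil => simp at h; omega
      | cons y p =>
        rcases hr' with ⟨rfl, -⟩ | ⟨rfl, -⟩
        · simp at h
          obtain ⟨rfl, rfl, h⟩ := h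
          obtain ⟨z1, z2, h1, h2, h3⟩ := ih p q h
          exact ⟨a :: z1, z2, by simp [h1], by simp [phiW_cons, hr, h2], h3⟩
        · cases p with
          | nil => simp at h; omega
          | cons y' p =>
            simp at h
            obtain ⟨rfl, rfl, rfl, h⟩ := h
            obtain ⟨z1, z2, h1, h2, h3⟩ := ih p q h
            exact ⟨a :: z1, z2, by simp [h1], by simp [phiW_cons, hr, h2], h3⟩

lemma desub_prefix (d : ℕ) (hd : 3 ≤ d) (v : List ℕ) : ∀ q z, (∀ x ∈ v, x < d) →
    (∀ x ∈ z, x < d) → phiW d v ++ 0 :: q = phiW d z ++ [0] →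
    ∃ z2, z = v ++ z2 ∧ 0 :: q = phiW d z2 ++ [0] := by
  induction v with
  | nil => intro q z _ _ h; exact ⟨z, rfl, h⟩
  | cons a v ih =>
    intro q z hv hz h
    have hal := hv a (by simp)
    obtain ⟨r, hr, hr'⟩ := phiL_tail d hd a
    cases z with
    | nil => rw [phiW_cons, hr] at h; simp [phiW_nil] at h
    | cons b z =>
      have hbl := hz b (by simp)
      obtain ⟨s, hs, hs'⟩ := phiL_tail d hd b
      obtain ⟨t, ht⟩ := phiW_zero_head d v
      obtain ⟨t', ht'⟩ := phiW_zero_head d z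
      have ht2 : phiW d v ++ 0 :: q = 0 :: (t ++ q) := by
        have : phiW d v ++ 0 :: q = (phiW d v ++ [0]) ++ q := by simp
        rw [this, ht]; rfl
      rw [phiW_cons, phiW_cons, hr, hs, List.append_assoc, List.append_assoc] at h
      have hab : a = b ∧ phiW d v ++ 0 :: q = phiW d z ++ [0] := by
        unfold ee at h
        rcases hr' with ⟨rfl, ha⟩ | ⟨rfl, ha⟩ <;> rcases hs' with ⟨rfl, hb⟩ | ⟨rfl, hb⟩
        · rw [if_pos ha, if_pos hb] at h
          simp at h
          exact ⟨by omega, h.2⟩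
        · rw [ht2] at h
          simp at h
          omega
        · rw [ht'] at h
          simp at h
          omega
        · simp at h
          exact ⟨by omega, h.2⟩
      obtain ⟨rfl, h'⟩ := hab
      obtain ⟨z2, h1, h2⟩ := ih q z (fun x hx => hv x (by simp [hx]))
        (fun x hx => hz x (by simp [hx])) h'
      exact ⟨z2, by simp [h1], h2⟩

/-- General desubstitution around `φ(v)0`. -/
lemma desub (d : ℕ) (hd : 3 ≤ d) (p v q : List ℕ) (hv : ∀ x ∈ v, x < d)
    (h : LL d (p ++ (phiW d v ++ 0 :: q))) :
    ∃ z1 z2, LL d (z1 ++ v ++ z2) ∧ p <:+ phiW d z1 ∧ (0 :: q) <+: phiW d z2 ++ [0] := by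
  obtain ⟨n, P, S, hn⟩ := h
  cases n with
  | zero => simp [Fword] at hn
  | succ n =>
    rw [Fword] at hn
    obtain ⟨t, ht⟩ := phiW_zero_head d v
    have e1 : P ++ (p ++ (phiW d v ++ 0 :: q)) ++ S = (P ++ p) ++ 0 :: (t ++ q ++ S) := by
      have : P ++ (p ++ (phiW d v ++ 0 :: q)) ++ S
        = P ++ p ++ (phiW d v ++ [0]) ++ (q ++ S) := by simp
      rw [this, ht]; simp
    rw [e1] at hn
    obtain ⟨z1, z2, h1, h2, h3⟩ := desub_zero d hd _ _ _ hn
    have e2 : 0 :: (t ++ q ++ S) = phiW d v ++ 0 :: (q ++ S) := by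
      have : phiW d v ++ 0 :: (q ++ S) = (phiW d v ++ [0]) ++ (q ++ S) := by simp
      rw [this, ht]; simp
    rw [e2] at h3
    obtain ⟨z3, h4, h5⟩ := desub_prefix d hd v _ _ hv (fun x hx => Fword_lt d hd n x (by
      rw [h1]; simp [hx])) h3
    refine ⟨z1, z3, ⟨n, ?_⟩, ⟨P, h2⟩, ⟨S, by simpa using h5⟩⟩
    rw [h1, h4]; simp

lemma desub_exists (d : ℕ) (hd : 3 ≤ d) (w t t' : List ℕ) (h : LL d w)
    (h0 : w = 0 :: t) (h1 : w = t' ++ [0]) : ∃ v, w = phiW d v ++ [0] ∧ LL d v := by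
  obtain ⟨n, P, S, hn⟩ := h
  cases n with
  | zero => simp [Fword, h0] at hn
  | succ n =>
    rw [Fword] at hn
    have e1 : P ++ w ++ S = P ++ 0 :: (t ++ S) := by simp [h0]
    rw [e1] at hn
    obtain ⟨z1, z2, h2, h3, h4⟩ := desub_zero d hd _ _ _ hn
    have e2 : 0 :: (t ++ S) = t' ++ 0 :: S := by
      have : 0 :: (t ++ S) = w ++ S := by simp [h0]
      rw [this, h1]; simp
    rw [e2] at h4
    obtain ⟨z3, z4, h5, h6, h7⟩ := desub_zero d hd _ _ _ h4
    refine ⟨z3, by rw [h1, h6], n, z1, z4, ?_⟩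
    rw [h2, h5]; simp

lemma phiW_last (d : ℕ) (hd : 3 ≤ d) (z p : List ℕ) (a : ℕ) (h : p ++ [a] <:+ phiW d z) :
    ∃ z' i, z = z' ++ [i] ∧ a = ee d i := by
  rcases List.eq_nil_or_concat z with rfl | ⟨z', i, rfl⟩
  · simp [phiW_nil] at h
  · refine ⟨z', i, by simp, ?_⟩
    obtain ⟨s, hs⟩ := h
    rw [List.concat_eq_append, phiW_append, phiW_cons, phiW_nil, ← List.append_assoc] at hs
    unfold phiL ee at *
    split_ifs at * with hi
    · have h2 : phiW d z' ++ ([0, i + 1] ++ []) = (phiW d z' ++ [0]) ++ [i + 1] := by simp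
      rw [h2] at hs
      simpa using (List.append_inj' hs rfl).2
    · have h2 : phiW d z' ++ ([0, d - 1, d - 1] ++ []) = (phiW d z' ++ [0, d - 1]) ++ [d - 1] := by
        simp
      rw [h2] at hs
      simpa using (List.append_inj' hs rfl).2

lemma phiW_last2 (d : ℕ) (hd : 3 ≤ d) (z : List ℕ) (c a : ℕ) (h : [c, a] <:+ phiW d z) :
    ∃ z' i, z = z' ++ [i] ∧ a = ee d i ∧ (c = 0 ∧ i < d - 1 ∨ c = d - 1 ∧ d - 1 ≤ i) := by
  rcases List.eq_nil_or_concat z with rfl | ⟨z', i, rfl⟩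
  · simp [phiW_nil] at h
  · refine ⟨z', i, by simp, ?_⟩
    obtain ⟨s, hs⟩ := h
    rw [List.concat_eq_append, phiW_append, phiW_cons, phiW_nil] at hs
    unfold phiL ee at *
    split_ifs at * with hi
    · have := (List.append_inj' hs rfl).2
      simp at this
      exact ⟨this.2, Or.inl ⟨this.1, hi⟩⟩
    · have h2 : phiW d z' ++ ([0, d - 1, d - 1] ++ []) = (phiW d z' ++ [0]) ++ [d - 1, d - 1] := by
        simp
      rw [h2] at hs
      have := (List.append_inj' hs rfl).2
      simp at this
      exact ⟨this.2, Or.inr ⟨this.1, by omega⟩⟩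

lemma phiW_first (d : ℕ) (hd : 3 ≤ d) (z : List ℕ) (b : ℕ) (h : [0, b] <+: phiW d z ++ [0]) :
    ∃ z' j, z = j :: z' ∧ b = ee d j := by
  cases z with
  | nil => have := h.length_le; simp [phiW_nil] at this
  | cons j z' =>
    refine ⟨z', j, rfl, ?_⟩
    obtain ⟨r, hr, -⟩ := phiL_tail d hd j
    rw [phiW_cons, hr] at h
    simpa using h

/-- Two-sided desubstitution. -/
lemma desub_both {d : ℕ} (hd : 3 ≤ d) {v : List ℕ} (hv : ∀ x ∈ v, x < d) {a b : ℕ}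
    (h : LL d (a :: (phiW d v ++ [0, b]))) :
    ∃ i j, LL d (i :: (v ++ [j])) ∧ a = ee d i ∧ b = ee d j := by
  obtain ⟨z1, z2, h1, h2, h3⟩ := desub d hd [a] v [b] hv h
  obtain ⟨z1', i, rfl, hi⟩ := phiW_last d hd z1 [] a h2
  obtain ⟨z2', j, rfl, hj⟩ := phiW_first d hd z2 b h3
  exact ⟨i, j, LL_infix h1 ⟨z1', z2', by simp⟩, hi, hj⟩

lemma desub_left {d : ℕ} (hd : 3 ≤ d) {v : List ℕ} (hv : ∀ x ∈ v, x < d) {a : ℕ}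
    (h : LL d (a :: (phiW d v ++ [0]))) : ∃ i, LL d (i :: v) ∧ a = ee d i := by
  obtain ⟨b, hb⟩ := LL_ext_right hd h
  obtain ⟨i, j, h1, h2, -⟩ := desub_both hd hv (a := a) (b := b) (by simpa using hb)
  exact ⟨i, LL_infix h1 ⟨[], [j], by simp⟩, h2⟩

lemma desub_left2 {d : ℕ} (hd : 3 ≤ d) {v : List ℕ} (hv : ∀ x ∈ v, x < d) {c a : ℕ}
    (h : LL d (c :: a :: (phiW d v ++ [0]))) : ∃ i, LL d (i :: v) ∧ a = ee d i ∧
      (c = 0 ∧ i < d - 1 ∨ c = d - 1 ∧ d - 1 ≤ i) := by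
  obtain ⟨z1, z2, h1, h2, h3⟩ := desub d hd [c, a] v [] hv h
  obtain ⟨z1', i, rfl, hi⟩ := phiW_last2 d hd z1 c a h2
  exact ⟨i, LL_infix h1 ⟨z1', z2, by simp⟩, hi⟩

/-! ### Short factors -/

lemma phi_pair (d : ℕ) (hd : 3 ≤ d) (z : List ℕ) : ∀ a b, [a, b] <:+: phiW d z ++ [0] →
    (a = 0 ∧ b ≠ 0 ∨ a ≠ 0 ∧ b = 0 ∨ a = d - 1 ∧ b = d - 1) := by
  induction z with
  | nil => intro a b h; have := h.length_le; simp [phiW_nil] at this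
  | cons x z ih =>
    intro a b h
    obtain ⟨r, hr, hr'⟩ := phiL_tail d hd x
    have he := ee_pos d hd x
    obtain ⟨t, ht⟩ := phiW_zero_head d z
    rw [phiW_cons, hr, List.append_assoc, ht] at h
    rw [ht] at ih
    rcases hr' with ⟨rfl, hx⟩ | ⟨rfl, hx⟩
    · simp only [List.nil_append, List.cons_append, List.infix_cons_iff (a := 0) (l₂ := _ :: _ :: _),
        List.infix_cons_iff (l₂ := 0 :: _)] at h
      rcases h with h | h | h
      · simp at h; omega
      · simp at h; omega
      · exact ih a b h
    · have hx' : ee d x = d - 1 := by unfold ee; rw [if_neg (by omega)]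
      rw [hx'] at h
      rw [List.cons_append, List.cons_append, List.cons_append, List.nil_append,
        List.infix_cons_iff, List.infix_cons_iff, List.infix_cons_iff] at h
      rcases h with h | h | h | h
      · simp at h; omega
      · simp at h; omega
      · simp at h; omega
      · exact ih a b h

lemma LL_pair {d : ℕ} (hd : 3 ≤ d) {a b : ℕ} (h : LL d [a, b]) :
    (a = 0 ∧ b ≠ 0 ∨ a ≠ 0 ∧ b = 0 ∨ a = d - 1 ∧ b = d - 1) := by
  obtain ⟨n, hn⟩ := h
  cases n with
  | zero => have := hn.length_le; simp [Fword] at this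
  | succ n => exact phi_pair d hd _ a b hn

lemma LL_pair' {d : ℕ} (hd : 3 ≤ d) {a b : ℕ} {w : List ℕ} (h : LL d (a :: b :: w)) :
    (a = 0 ∧ b ≠ 0 ∨ a ≠ 0 ∧ b = 0 ∨ a = d - 1 ∧ b = d - 1) :=
  LL_pair hd (LL_infix h ⟨[], w, rfl⟩)

lemma phi_triple (d : ℕ) (hd : 3 ≤ d) (z : List ℕ) :
    ¬ [d - 1, d - 1, d - 1] <:+: phiW d z ++ [0] := by
  induction z with
  | nil => intro h; have := h.length_le; simp [phiW_nil] at this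
  | cons x z ih =>
    intro h
    obtain ⟨r, hr, hr'⟩ := phiL_tail d hd x
    obtain ⟨t, ht⟩ := phiW_zero_head d z
    rw [phiW_cons, hr, List.append_assoc, ht] at h
    rw [ht] at ih
    rcases hr' with ⟨rfl, hx⟩ | ⟨rfl, hx⟩
    · rw [List.cons_append, List.cons_append, List.nil_append,
        List.infix_cons_iff, List.infix_cons_iff] at h
      rcases h with h | h | h
      · simp at h; omega
      · simp at h; omega
      · exact ih h
    · rw [List.cons_append, List.cons_append, List.cons_append, List.nil_append,
        List.infix_cons_iff, List.infix_cons_iff, List.infix_cons_iff] at h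
      rcases h with h | h | h | h
      · simp at h; omega
      · simp at h; omega
      · simp at h; omega
      · exact ih h

lemma LL_triple {d : ℕ} (hd : 3 ≤ d) {w : List ℕ} :
    ¬ LL d ((d - 1) :: (d - 1) :: (d - 1) :: w) := by
  intro h
  obtain ⟨n, hn⟩ := LL_infix h (v := [d - 1, d - 1, d - 1]) ⟨[], w, rfl⟩
  cases n with
  | zero => have := hn.length_le; simp [Fword] at this
  | succ n => exact phi_triple d hd _ hn

/-! ### Extensions of the words `F_i` -/

lemma F_left_ge {d : ℕ} (hd : 3 ≤ d) (i : ℕ) : i ≤ d - 1 → ∀ a, LL d (a :: Fword d i) → i ≤ a := by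
  induction i with
  | zero => intros; omega
  | succ i ih =>
    intro hi a h
    rw [Fword] at h
    obtain ⟨j, hj, rfl⟩ := desub_left hd (Fword_lt d hd i) h
    have := ih (by omega) j hj
    unfold ee
    split_ifs <;> omega

lemma F_both {d : ℕ} (hd : 3 ≤ d) (i : ℕ) : i ≤ d - 2 → ∀ a b, i + 1 ≤ a →
    LL d (a :: (Fword d i ++ [b])) → b = i ∨ b = d - 1 := by
  induction i with
  | zero =>
    intro hi a b ha h
    have := LL_pair hd h
    omega
  | succ i ih =>
    intro hi a b ha h
    rw [Fword] at h
    obtain ⟨j, k, hj, rfl, rfl⟩ := desub_both hd (Fword_lt d hd i) (by simpa using h)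
    have := ih (by omega) j k (by unfold ee at ha; split_ifs at ha <;> omega) hj
    unfold ee
    split_ifs <;> omega

/-! ### Main induction -/

def LS (d : ℕ) (w : List ℕ) : Prop := ∃ a b, a ≠ b ∧ LL d (a :: w) ∧ LL d (b :: w)

def RS (d : ℕ) (w : List ℕ) : Prop := ∃ a b, a ≠ b ∧ LL d (w ++ [a]) ∧ LL d (w ++ [b])

def PP (d : ℕ) (w : List ℕ) : Prop :=
  LL d ((d - 1) :: w) ∧ LL d (w ++ [d - 1]) ∧ ((∃ i, i ≤ d - 3 ∧ w = Fword d i) ∨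
    ((∃ c, ∀ a, LL d (a :: w) → a = c ∨ a = d - 1) ∧
     (∃ c, ∀ a, LL d (w ++ [a]) → a = c ∨ a = d - 1)))

lemma RS_reverse {d : ℕ} {w : List ℕ} : RS d w ↔ LS d w.reverse := by
  unfold RS LS; simp only [LL_rcons]

lemma LS_reverse {d : ℕ} {w : List ℕ} : LS d w ↔ RS d w.reverse := by
  rw [RS_reverse]; simp

lemma PP_reverse {d : ℕ} {w : List ℕ} (h : PP d w.reverse) : PP d w := by
  obtain ⟨h1, h2, h3⟩ := h
  rw [LL_rcons'] at h2
  rw [← LL_rcons] at h1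
  refine ⟨h2, h1, ?_⟩
  rcases h3 with ⟨i, hi, h⟩ | ⟨h, h'⟩
  · left
    refine ⟨i, hi, ?_⟩
    rw [← Fword_reverse, ← h]; simp
  · right
    simp only [LL_rcons'] at h'
    simp only [← LL_rcons] at h
    exact ⟨h', h⟩

lemma left_shape {d : ℕ} (hd : 3 ≤ d) {w : List ℕ} (h : LS d w) :
    w = [] ∨ w = [d - 1] ∨ (∃ t, w = 0 :: t) ∨ (∃ t, w = (d - 1) :: 0 :: t) := by
  obtain ⟨a, b, hab, ha, hb⟩ := h
  cases w with
  | nil => simp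
  | cons x w =>
    have h1 := LL_pair' hd ha
    have h2 := LL_pair' hd hb
    by_cases hx0 : x = 0
    · subst hx0; simp
    have hx : x = d - 1 := by omega
    subst hx
    cases w with
    | nil => simp
    | cons y w =>
      have h3 := LL_pair' hd (LL_tail ha)
      by_cases hy : y = 0
      · subst hy; simp
      have hy : y = d - 1 := by omega
      subst hy
      exfalso
      rcases (by omega : a = d - 1 ∨ b = d - 1) with rfl | rfl
      · exact LL_triple hd ha
      · exact LL_triple hd hb

lemma right_shape {d : ℕ} (hd : 3 ≤ d) {w : List ℕ} (h : RS d w) :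
    w = [] ∨ w = [d - 1] ∨ (∃ t, w = t ++ [0]) ∨ (∃ t, w = t ++ [0, d - 1]) := by
  rw [RS_reverse] at h
  rcases left_shape hd h with h | h | ⟨t, h⟩ | ⟨t, h⟩
  · left; simpa using h
  · right; left; rw [← List.reverse_reverse w, h]; simp
  · right; right; left; exact ⟨t.reverse, by rw [← List.reverse_reverse w, h]; simp⟩
  · right; right; right; exact ⟨t.reverse, by rw [← List.reverse_reverse w, h]; simp⟩

lemma left_dm1 {d : ℕ} (hd : 3 ≤ d) {t : List ℕ} (h : LS d ((d - 1) :: t)) :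
    LL d (0 :: (d - 1) :: t) ∧ LL d ((d - 1) :: (d - 1) :: t) ∧
    (∃ c, ∀ a, LL d (a :: (d - 1) :: t) → a = c ∨ a = d - 1) := by
  have key : ∀ a, LL d (a :: (d - 1) :: t) → a = 0 ∨ a = d - 1 := by
    intro a ha
    have := LL_pair' hd ha
    omega
  obtain ⟨a, b, hab, ha, hb⟩ := h
  refine ⟨?_, ?_, 0, key⟩
  · rcases key a ha with rfl | rfl
    · exact ha
    · rcases key b hb with rfl | rfl
      · exact hb
      · omega
  · rcases key a ha with rfl | rfl
    · rcases key b hb with rfl | rfl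
      · omega
      · exact hb
    · exact ha

lemma right_dm1 {d : ℕ} (hd : 3 ≤ d) {t : List ℕ} (h : RS d (t ++ [d - 1])) :
    LL d (t ++ [d - 1] ++ [d - 1]) ∧
    (∃ c, ∀ a, LL d (t ++ [d - 1] ++ [a]) → a = c ∨ a = d - 1) := by
  rw [RS_reverse] at h
  simp only [List.reverse_append, List.reverse_cons, List.reverse_nil, List.nil_append,
    List.cons_append] at h
  obtain ⟨-, h1, h2⟩ := left_dm1 hd h
  simp only [LL_rcons, List.reverse_append, List.reverse_cons, List.reverse_nil, List.nil_append,
    List.cons_append] at *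
  exact ⟨h1, h2⟩

lemma ee_dm1 (d : ℕ) : ee d (d - 1) = d - 1 := by unfold ee; rw [if_neg (by omega)]

lemma LL_up_left {d : ℕ} (hd : 3 ≤ d) {v : List ℕ} (h : LL d ((d - 1) :: v)) :
    LL d ((d - 1) :: (phiW d v ++ [0])) := by
  have h := LL_phi h
  rw [phiW_cons, phiL, if_neg (by omega)] at h
  exact LL_infix h ⟨[0, d - 1], [], by simp⟩

lemma LL_up_right {d : ℕ} (hd : 3 ≤ d) {v : List ℕ} (h : LL d (v ++ [d - 1])) :
    LL d ((phiW d v ++ [0]) ++ [d - 1]) := by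
  have h := LL_phi h
  rw [phiW_append, phiW_cons, phiL, if_neg (by omega)] at h
  exact LL_infix h ⟨[], [d - 1, 0], by simp [phiW_nil]⟩

lemma desub_right {d : ℕ} (hd : 3 ≤ d) {v : List ℕ} (hv : ∀ x ∈ v, x < d) {a : ℕ}
    (h : LL d ((phiW d v ++ [0]) ++ [a])) : ∃ i, LL d (v ++ [i]) ∧ a = ee d i := by
  rw [LL_rcons, phiW_reverse] at h
  obtain ⟨i, h1, h2⟩ := desub_left hd (by simpa using hv) h
  exact ⟨i, LL_rcons.mpr h1, h2⟩

lemma LS_down {d : ℕ} (hd : 3 ≤ d) {v : List ℕ} (hv : ∀ x ∈ v, x < d)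
    (h : LS d (phiW d v ++ [0])) : LS d v := by
  obtain ⟨a, b, hab, ha, hb⟩ := h
  obtain ⟨i, hi, rfl⟩ := desub_left hd hv ha
  obtain ⟨j, hj, rfl⟩ := desub_left hd hv hb
  exact ⟨i, j, fun h => hab (by rw [h]), hi, hj⟩

lemma RS_down {d : ℕ} (hd : 3 ≤ d) {v : List ℕ} (hv : ∀ x ∈ v, x < d)
    (h : RS d (phiW d v ++ [0])) : RS d v := by
  obtain ⟨a, b, hab, ha, hb⟩ := h
  obtain ⟨i, hi, rfl⟩ := desub_right hd hv ha
  obtain ⟨j, hj, rfl⟩ := desub_right hd hv hb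
  exact ⟨i, j, fun h => hab (by rw [h]), hi, hj⟩

lemma caseA {d : ℕ} (hd : 3 ≤ d) {v : List ℕ} (hv : ∀ x ∈ v, x < d) (h : PP d v) :
    PP d (phiW d v ++ [0]) := by
  obtain ⟨h1, h2, h3⟩ := h
  refine ⟨LL_up_left hd h1, LL_up_right hd h2, ?_⟩
  rcases h3 with ⟨i, hi, rfl⟩ | ⟨⟨c, hc⟩, ⟨c', hc'⟩⟩
  · by_cases hi' : i + 1 ≤ d - 3
    · exact Or.inl ⟨i + 1, hi', rfl⟩
    · right
      have key : ∀ a, LL d (a :: Fword d (i + 1)) → a = d - 2 ∨ a = d - 1 := by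
        intro a ha
        have h1 := F_left_ge hd (i + 1) (by omega) a ha
        have h2 := LL_lt hd ha a (by simp)
        omega
      refine ⟨⟨d - 2, key⟩, ⟨d - 2, ?_⟩⟩
      intro a ha
      rw [LL_rcons, phiW_reverse, Fword_reverse] at ha
      exact key a ha
  · right
    refine ⟨⟨ee d c, ?_⟩, ⟨ee d c', ?_⟩⟩
    · intro a ha
      obtain ⟨i, hi, rfl⟩ := desub_left hd hv ha
      rcases hc i hi with rfl | rfl
      · simp
      · simp [ee_dm1]
    · intro a ha
      obtain ⟨i, hi, rfl⟩ := desub_right hd hv ha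
      rcases hc' i hi with rfl | rfl
      · simp
      · simp [ee_dm1]

/-- Facts on `v` coming from left speciality of `(d-1)φ(v)0`. -/
lemma caseB_left {d : ℕ} (hd : 3 ≤ d) {v : List ℕ} (hv : ∀ x ∈ v, x < d)
    (hL : LS d ((d - 1) :: (phiW d v ++ [0]))) : LL d ((d - 2) :: v) ∧ LL d ((d - 1) :: v) := by
  obtain ⟨h0, h1, -⟩ := left_dm1 hd hL
  obtain ⟨i, hi, he, hi'⟩ := desub_left2 hd hv h0
  obtain ⟨j, hj, -, hj'⟩ := desub_left2 hd hv h1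
  have hjd := LL_lt hd hj j (by simp)
  have e1 : i = d - 2 := by
    unfold ee at he
    split_ifs at he <;> omega
  have e2 : j = d - 1 := by omega
  subst e1 e2
  exact ⟨hi, hj⟩

lemma caseB_RS {d : ℕ} (hd : 3 ≤ d) {v : List ℕ} (hv : ∀ x ∈ v, x < d)
    (hR : RS d ((d - 1) :: (phiW d v ++ [0]))) : RS d v := by
  apply RS_down hd hv
  obtain ⟨a, b, hab, ha, hb⟩ := hR
  exact ⟨a, b, hab, LL_tail ha, LL_tail hb⟩

lemma caseB {d : ℕ} (hd : 3 ≤ d) {v : List ℕ} (hv : ∀ x ∈ v, x < d) (h : PP d v)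
    (hL : LS d ((d - 1) :: (phiW d v ++ [0]))) :
    PP d ((d - 1) :: (phiW d v ++ [0])) := by
  obtain ⟨h1, h2, h3⟩ := h
  obtain ⟨-, g1, g2⟩ := left_dm1 hd hL
  obtain ⟨k1, k2⟩ := caseB_left hd hv hL
  have down : ∀ b, LL d ((d - 1) :: (phiW d v ++ [0]) ++ [b]) →
      ∃ i j, LL d (i :: (v ++ [j])) ∧ d - 1 = ee d i ∧ b = ee d j := by
    intro b hb
    exact desub_both hd hv (by simpa using hb)
  have up : ∀ i, d - 1 = ee d i → LL d (i :: (v ++ [d - 1])) →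
      LL d ((d - 1) :: (phiW d v ++ [0]) ++ [d - 1]) := by
    intro i hi h
    have h := LL_phi h
    rw [phiW_cons, phiW_append, phiW_cons, phiW_nil] at h
    have e : ∃ s, phiL d i = s ++ [d - 1] := by
      unfold phiL
      unfold ee at hi
      split_ifs at *
      · exact ⟨[0], by simp [← hi]⟩
      · exact ⟨[0, d - 1], rfl⟩
    obtain ⟨s, hs⟩ := e
    have e2 : phiL d (d - 1) = [0, d - 1, d - 1] := by unfold phiL; rw [if_neg (by omega)]
    rw [hs, e2] at h
    exact LL_infix h ⟨s, [d - 1, 0], by simp⟩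
  rcases h3 with ⟨i, hi, rfl⟩ | ⟨⟨c, hc⟩, ⟨c', hc'⟩⟩
  · refine ⟨g1, up (d - 1) (ee_dm1 d).symm (LL_F_both d hd i), Or.inr ⟨g2, ee d i, ?_⟩⟩
    intro b hb
    obtain ⟨x, y, hxy, hx, rfl⟩ := down b hb
    have : i + 1 ≤ x := by unfold ee at hx; split_ifs at hx <;> omega
    rcases F_both hd i (by omega) x y this hxy with rfl | rfl
    · simp
    · simp [ee_dm1]
  · refine ⟨g1, ?_, Or.inr ⟨g2, ee d c', ?_⟩⟩
    · obtain ⟨x, hx⟩ := LL_ext_left hd h2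
      have hx' : LL d (x :: v) := LL_infix hx ⟨[], [d - 1], by simp⟩
      refine up x ?_ hx
      have a1 := hc _ k1
      have a2 := hc _ hx'
      unfold ee
      split_ifs <;> omega
    · intro b hb
      obtain ⟨x, y, hxy, hx, rfl⟩ := down b hb
      rcases hc' y (LL_tail hxy) with rfl | rfl
      · simp
      · simp [ee_dm1]

lemma length_phiW (d : ℕ) (v : List ℕ) : v.length ≤ (phiW d v).length := by
  induction v with
  | nil => simp
  | cons a v ih =>
    rw [phiW_cons, phiL]
    split_ifs <;> simp <;> omega

/-- Case `w = (d-1)0⋯0`, given the induction hypothesis. -/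
lemma caseB' {d : ℕ} (hd : 3 ≤ d) {w t t' : List ℕ}
    (ih : ∀ v : List ℕ, v.length < w.length → LS d v → RS d v → PP d v)
    (hw : w = (d - 1) :: 0 :: t) (hw' : w = t' ++ [0]) (hL : LS d w) (hR : RS d w) : PP d w := by
  have hLL : LL d w := by obtain ⟨a, b, -, h, -⟩ := hL; exact LL_tail h
  have h0 : ∃ t'', 0 :: t = t'' ++ [0] := by
    cases t' with
    | nil => rw [hw] at hw'; simp at hw'
    | cons x t' =>
      rw [hw] at hw'
      simp only [List.cons_append, List.cons.injEq] at hw'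
      exact ⟨t', hw'.2⟩
  obtain ⟨t'', ht''⟩ := h0
  have hLL' : LL d (0 :: t) := LL_tail (hw ▸ hLL)
  obtain ⟨v, hv, hvL⟩ := desub_exists d hd _ t t'' hLL' rfl ht''
  rw [hv] at hw
  subst hw
  have hvd := LL_lt hd hvL
  obtain ⟨k1, k2⟩ := caseB_left hd hvd hL
  have hlen := length_phiW d v
  exact caseB hd hvd (ih v (by simp; omega) ⟨d - 2, d - 1, by omega, k1, k2⟩
    (caseB_RS hd hvd hR)) hL

theorem main (d : ℕ) (hd : 3 ≤ d) (n : ℕ) :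
    ∀ w : List ℕ, w.length = n → LS d w → RS d w → PP d w := by
  induction n using Nat.strong_induction_on with
  | _ n IH =>
    intro w hn hL hR
    have ih : ∀ v : List ℕ, v.length < w.length → LS d v → RS d v → PP d v :=
      fun v hv h1 h2 => IH v.length (by omega) v rfl h1 h2
    have hLL : LL d w := by obtain ⟨a, b, -, h, -⟩ := hL; exact LL_tail h
    have both : ∀ t t', w = (d - 1) :: t → w = t' ++ [d - 1] → PP d w := by
      intro t t' h1 h2
      have a1 := left_dm1 hd (h1 ▸ hL)
      have a2 := right_dm1 hd (h2 ▸ hR)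
      rw [← h1] at a1
      rw [← h2] at a2
      exact ⟨a1.2.1, a2.1, Or.inr ⟨a1.2.2, a2.2⟩⟩
    rcases left_shape hd hL with h | h | ⟨t, h⟩ | ⟨t, h⟩
    · subst h
      exact ⟨LL_letter d (d - 1) (by omega), LL_letter d (d - 1) (by omega),
        Or.inl ⟨0, by omega, rfl⟩⟩
    · exact both [] [] h h
    · rcases right_shape hd hR with h' | h' | ⟨t', h'⟩ | ⟨t', h'⟩
      · simp [h] at h'
      · simp [h] at h'; omega
      · obtain ⟨v, hv, hvL⟩ := desub_exists d hd w t t' hLL h h'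
        have hvd := LL_lt hd hvL
        have hlen := length_phiW d v
        subst hv
        exact caseA hd hvd (ih v (by simp; omega) (LS_down hd hvd hL) (RS_down hd hvd hR))
      · apply PP_reverse
        refine caseB' hd (w := w.reverse) (t := t'.reverse) (t' := t.reverse) ?_ ?_ ?_ ?_ ?_
        · intro v hv; exact ih v (by simpa using hv)
        · rw [h']; simp
        · rw [h]; simp
        · rwa [← RS_reverse]
        · rwa [← LS_reverse]
    · rcases right_shape hd hR with h' | h' | ⟨t', h'⟩ | ⟨t', h'⟩
      · simp [h] at h'
      · simp [h] at h'
      · exact caseB' hd ih h h' hL hR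
      · exact both (0 :: t) (t' ++ [0]) h (by simp [h'])

/-! ### Transfer to the sequence -/

lemma Fword_prefix (d : ℕ) (hd : 3 ≤ d) (u : ℕ → ℕ) (hu : IsPhiFixed d u) (n : ℕ) :
    Fword d n = (List.range (Fword d n).length).map u := by
  induction n with
  | zero => rfl
  | succ n ih =>
    have h := hu.2 ((Fword d n).length + 1)
    rw [List.range_succ, List.map_append, ← ih, phiW_append] at h
    obtain ⟨r, hr, -⟩ := phiL_tail d hd (u (Fword d n).length)
    simp only [List.map_cons, List.map_nil, phiW_cons, phiW_nil, hr, List.append_nil] at h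
    have e : phiW d (Fword d n) ++ 0 :: ee d (u (Fword d n).length) :: r =
      Fword d (n + 1) ++ (ee d (u (Fword d n).length) :: r) := by simp [Fword]
    rw [e] at h
    unfold OccursAt at h
    simp only [Nat.zero_add] at h
    rw [List.length_append, List.range_add, List.map_append] at h
    exact (List.append_inj h (by simp)).1

lemma Fword_length (d n : ℕ) : n ≤ (Fword d n).length := by
  induction n with
  | zero => simp
  | succ n ih =>
    have := length_phiW d (Fword d n)
    simp [Fword]; omega

lemma factor_iff (d : ℕ) (hd : 3 ≤ d) (u : ℕ → ℕ) (hu : IsPhiFixed d u) (w : List ℕ) :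
    IsFactorS w u ↔ LL d w := by
  constructor
  · rintro ⟨j, hj⟩
    refine ⟨j + w.length, ?_⟩
    have h1 := Fword_length d (j + w.length)
    obtain ⟨k, hk⟩ := Nat.exists_eq_add_of_le h1
    rw [Fword_prefix d hd u hu, hk, List.range_add, List.range_add, List.map_append,
      List.map_append]
    refine ⟨List.map u (List.range j),
      List.map u (List.map (fun x => j + w.length + x) (List.range k)), ?_⟩
    congr 2
    rw [List.map_map]
    exact hj
  · rintro ⟨n, p, s, h⟩
    refine ⟨p.length, ?_⟩
    have h2 := Fword_prefix d hd u hu n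
    rw [← h, List.length_append, List.length_append, List.range_add, List.range_add,
      List.map_append, List.map_append] at h2
    have h3 := (List.append_inj (List.append_inj h2 (by simp)).1 (by simp)).2
    unfold OccursAt
    rw [List.map_map] at h3
    exact h3

lemma two_of_ncard {s : Set (List ℕ)} (h : 2 ≤ s.ncard) : ∃ x ∈ s, ∃ y ∈ s, x ≠ y := by
  have hf : s.Finite := Set.finite_of_ncard_pos (by omega)
  obtain ⟨x, y, hx, hy, hxy⟩ := (Set.one_lt_ncard_iff hf).mp h
  exact ⟨x, hx, y, hy, hxy⟩

lemma ncard_le_two {s : Set (List ℕ)} (x y : List ℕ) (h : ∀ z ∈ s, z = x ∨ z = y) :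
    s.ncard ≤ 2 := by
  calc s.ncard ≤ ({x, y} : Set (List ℕ)).ncard :=
        Set.ncard_le_ncard (fun z hz => by simpa using h z hz) (Set.toFinite _)
    _ ≤ 2 := by
        have := Set.ncard_insert_le x {y}
        simpa using this

lemma PP_of_bispecial (d : ℕ) (hd : 3 ≤ d) (u : ℕ → ℕ) (hu : IsPhiFixed d u) (w : List ℕ)
    (h : Bispecial u w) : PP d w := by
  obtain ⟨-, h1, h2⟩ := h
  refine main d hd _ w rfl ?_ ?_
  · obtain ⟨x, ⟨a, rfl, ha⟩, y, ⟨b, rfl, hb⟩, hxy⟩ := two_of_ncard h1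
    rw [factor_iff d hd u hu] at ha hb
    exact ⟨a, b, fun h => hxy (by rw [h]), ha, hb⟩
  · obtain ⟨x, ⟨a, rfl, ha⟩, y, ⟨b, rfl, hb⟩, hxy⟩ := two_of_ncard h2
    rw [factor_iff d hd u hu] at ha hb
    exact ⟨a, b, fun h => hxy (by rw [h]), ha, hb⟩

/-- Let `d ≥ 3`. Every bispecial factor `w` of `u_d` has `(d−1)w` and
`w(d−1)` in `L(u_d)`, and the only bispecial factors with more than two left extensions
or more than two right extensions are `F_0, F_1, …, F_{d−3}`. -/
theorem statement8 (d : ℕ) (hd : 3 ≤ d) (u : ℕ → ℕ) (hu : IsPhiFixed d u) :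
    (∀ w : List ℕ, Bispecial u w →
      IsFactorS ((d - 1) :: w) u ∧ IsFactorS (w ++ [d - 1]) u) ∧
    (∀ w : List ℕ, Bispecial u w →
      (2 < (Lext u w).ncard ∨ 2 < (Rext u w).ncard) →
      ∃ i : ℕ, i ≤ d - 3 ∧ w = Fword d i) := by
  refine ⟨?_, ?_⟩
  · intro w hw
    obtain ⟨h1, h2, -⟩ := PP_of_bispecial d hd u hu w hw
    exact ⟨(factor_iff d hd u hu _).mpr h1, (factor_iff d hd u hu _).mpr h2⟩
  · intro w hw hc
    obtain ⟨-, -, h3⟩ := PP_of_bispecial d hd u hu w hw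
    rcases h3 with h3 | ⟨⟨c, hL⟩, ⟨c', hR⟩⟩
    · exact h3
    · exfalso
      have a1 : (Lext u w).ncard ≤ 2 := by
        refine ncard_le_two (c :: w) ((d - 1) :: w) ?_
        rintro z ⟨i, rfl, hi⟩
        rcases hL i ((factor_iff d hd u hu _).mp hi) with rfl | rfl <;> simp
      have a2 : (Rext u w).ncard ≤ 2 := by
        refine ncard_le_two (w ++ [c']) (w ++ [d - 1]) ?_
        rintro z ⟨i, rfl, hi⟩
        rcases hR i ((factor_iff d hd u hu _).mp hi) with rfl | rfl <;> simp
      omega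
end RichRT
end
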